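/- arXiv:2402.07061 — 3 statements merged into one kernel-verified Lean document; each statement's English description precedes it below -/
import Mathlib

section
/- For every integer k ≥ 9, TSP/k-Opt has the all-exp property: there are infinitely many pairs of a TSP instance and an initial tour such that every maximal improving k-swap sequence starting from the initial tour has length exponential in the number of vertices of the instance; equivalently, the k-Opt algorithm started from this tour needs an exponential number of iterations under every pivot rule. -/
/-!
Statement 2: For every integer k ≥ 9, TSP/k-Opt has the all-exp property.

A TSP instance on `Fin n` is given by a nonnegative weight function on `Sym2 (Fin n)`
(the underlying graph being complete). A tour is a Hamiltonian cycle, modelled as a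
permutation which is a single cycle through all vertices.
-/

open Finset

variable {V : Type*} [Fintype V] [DecidableEq V]

/-- A tour: a permutation of the vertices forming one cycle through all of them. -/
def IsTour (σ : Equiv.Perm V) : Prop :=
  σ.IsCycle ∧ σ.support = Finset.univ

/-- The set of edges used by a tour. -/
def tourEdges (σ : Equiv.Perm V) : Finset (Sym2 V) :=
  Finset.univ.image fun v => s(v, σ v)

/-- The total weight of a tour. -/
def tourWeight (w : Sym2 V → ℝ) (σ : Equiv.Perm V) : ℝ :=
  ∑ e ∈ tourEdges σ, w e

/-- A `k`-swap: replace at most `k` edges of the tour (with equally many new edges)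
so that again a tour results. -/
def IsKSwap (k : ℕ) (σ σ' : Equiv.Perm V) : Prop :=
  IsTour σ' ∧ (tourEdges σ \ tourEdges σ').card ≤ k

/-- An improving `k`-swap strictly decreases the total tour weight. -/
def ImprovingKSwap (w : Sym2 V → ℝ) (k : ℕ) (σ σ' : Equiv.Perm V) : Prop :=
  IsKSwap k σ σ' ∧ tourWeight w σ' < tourWeight w σ

/-- A k-Opt locally optimal tour: no improving `k`-swap exists. -/
def IsLocalOpt (w : Sym2 V → ℝ) (k : ℕ) (σ : Equiv.Perm V) : Prop :=
  ∀ σ', ¬ ImprovingKSwap w k σ σ'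

/-- Improving `k`-swap sequences starting from a given tour. -/
def ImprovingSwapSeq (w : Sym2 V → ℝ) (k : ℕ) : Equiv.Perm V → List (Equiv.Perm V) → Prop
  | _, [] => True
  | σ, τ :: l => ImprovingKSwap w k σ τ ∧ ImprovingSwapSeq w k τ l

/-- A maximal improving `k`-swap sequence: an improving sequence ending at a
k-Opt locally optimal tour. -/
def MaximalImprovingSwapSeq (w : Sym2 V → ℝ) (k : ℕ) (σ₀ : Equiv.Perm V)
    (l : List (Equiv.Perm V)) : Prop :=
  ImprovingSwapSeq w k σ₀ l ∧ IsLocalOpt w k ((σ₀ :: l).getLast (List.cons_ne_nil _ _))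

/-- The all-exp property for TSP/k-Opt: there is a constant `c > 1` such that for
infinitely many sizes `n` there are a TSP instance on `n` vertices and an initial tour
from which every maximal improving `k`-swap sequence has length at least `c ^ n`,
i.e. the k-Opt algorithm needs exponentially many iterations under every pivot rule. -/
def TSPKOptAllExp (k : ℕ) : Prop :=
  ∃ c : ℝ, 1 < c ∧
    ∀ N : ℕ, ∃ n : ℕ, N ≤ n ∧
      ∃ (w : Sym2 (Fin n) → ℝ) (τ₀ : Equiv.Perm (Fin n)),
        (∀ e, 0 ≤ w e) ∧ IsTour τ₀ ∧
        ∀ l : List (Equiv.Perm (Fin n)),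
          MaximalImprovingSwapSeq w k τ₀ l → c ^ n ≤ (l.length : ℝ)

/-!
The instance simulates a redundant binary counter. Its vertices are the exits and the entries of
the positions `(i, x)`, with `i` one of `R + 1` layers and `x` a residue modulo `N`. Every cheap
tour contains all the free edges, which run along the residues of each layer, and is therefore
given by the state `s i` in which it leaves each layer `i`. The costs of the other edges enforce
`s 0 = 0` and `s (i + 1) = 2 * s i + d i` with digits `d i ∈ {0, 1, 2}`, so that the states are the
prefixes, modulo `N`, of a number with `R` digits.

Raising a digit `d j < 2` and clearing a digit `d (j + 1) = 2` changes only the state `s (j + 1)`,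
hence is a 3-swap. It is improving since the price of a missing unit of `d i` is `3 ^ (R - i)`, so
the only local optimum has all digits `2` and the value `2 ^ (R + 1) - 2`. Conversely a `k`-swap
changes at most `k` states, and two digit sequences with states differing in at most `k` layers
have values differing by less than `2 ^ (k + 1)`: the difference of the prefixes at most doubles,
up to `2`, from layer to layer and vanishes wherever the states agree, as it stays below
`N = 2 ^ (k + 2)`. Starting from the value `0`, every maximal sequence of improving swaps thus has
at least `2 ^ (R - k - 1)` steps, on a number of vertices that is linear in `R`.
-/

section Tours

variable {σ : Equiv.Perm V}

theorem IsTour.apply_ne (hσ : IsTour σ) (v : V) : σ v ≠ v :=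
  Equiv.Perm.mem_support.1 (hσ.2 ▸ mem_univ v)

theorem IsTour.inv (hσ : IsTour σ) : IsTour σ⁻¹ :=
  ⟨hσ.1.inv, by rw [Equiv.Perm.support_inv, hσ.2]⟩

theorem IsTour.induction_on {p : V → Prop} (hσ : IsTour σ) {u : V} (base : p u)
    (step : ∀ v, p v → p (σ v)) (v : V) : p v := by
  obtain ⟨m, rfl⟩ := hσ.1.exists_pow_eq (hσ.apply_ne u) (hσ.apply_ne v)
  induction m with
  | zero => exact base
  | succ m ih =>
    rw [pow_succ', Equiv.Perm.mul_apply]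
    exact step _ ih

theorem isTour_of_sameCycle {u : V} (hne : ∀ v, σ v ≠ v) (hu : ∀ v, σ.SameCycle u v) :
    IsTour σ :=
  ⟨⟨u, hne u, fun v _ => hu v⟩, by ext v; simp [hne v]⟩

theorem IsTour.apply_apply_ne (hσ : IsTour σ) (hV : 3 ≤ Fintype.card V) (v : V) :
    σ (σ v) ≠ v := by
  intro hv
  have hswap : σ = Equiv.swap v (σ v) :=
    hσ.1.eq_swap_of_apply_apply_eq_self (hσ.apply_ne v) hv
  have hcard : #σ.support = 2 := by
    rw [hswap]
    exact Equiv.Perm.card_support_swap (hσ.apply_ne v).symm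
  rw [hσ.2, card_univ] at hcard
  omega

theorem mk_mem_tourEdges {u v : V} : s(u, v) ∈ tourEdges σ ↔ σ u = v ∨ σ v = u := by
  simp only [tourEdges, mem_image, mem_univ, true_and, Sym2.eq_iff]
  grind

theorem tourEdges_inv (σ : Equiv.Perm V) : tourEdges σ⁻¹ = tourEdges σ := by
  ext ⟨u, v⟩
  simp only [mk_mem_tourEdges, Equiv.Perm.inv_eq_iff_eq]
  grind

theorem IsTour.injective_edge (hσ : IsTour σ) (hV : 3 ≤ Fintype.card V) :
    Function.Injective fun v => s(v, σ v) := by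
  intro u v huv
  rcases Sym2.eq_iff.1 huv with ⟨h, -⟩ | ⟨hu, hv⟩
  · exact h
  · exact absurd (hu ▸ hv) (hσ.apply_apply_ne hV v)

theorem IsTour.card_tourEdges (hσ : IsTour σ) (hV : 3 ≤ Fintype.card V) :
    #(tourEdges σ) = Fintype.card V :=
  card_image_of_injective _ (hσ.injective_edge hV)

theorem IsTour.tourWeight_eq_sum (hσ : IsTour σ) (hV : 3 ≤ Fintype.card V) (w : Sym2 V → ℝ) :
    tourWeight w σ = ∑ v, w s(v, σ v) :=
  sum_image fun _ _ _ _ h => hσ.injective_edge hV h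

theorem le_tourWeight {w : Sym2 V → ℝ} (hw : ∀ e, 0 ≤ w e) {e : Sym2 V}
    (he : e ∈ tourEdges σ) : w e ≤ tourWeight w σ :=
  single_le_sum (fun e _ => hw e) he

-- A tour missing an edge of `F` has more than `|V| - |F|` edges outside `F`.
theorem IsTour.subset_tourEdges_of_tourWeight_lt (hσ : IsTour σ) (hV : 3 ≤ Fintype.card V)
    {w : Sym2 V → ℝ} {F : Finset (Sym2 V)} {h : ℝ} (hw : ∀ e, 0 ≤ w e) (h_nonneg : 0 ≤ h)
    (hF : ∀ e ∉ F, h ≤ w e) (hlt : tourWeight w σ < (Fintype.card V + 1 - #F) * h) :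
    F ⊆ tourEdges σ := by
  by_contra hsub
  have hinter : #(tourEdges σ ∩ F) < #F :=
    card_lt_card ⟨inter_subset_right, fun hF' => hsub (hF'.trans inter_subset_left)⟩
  have hcard : Fintype.card V + 1 ≤ #(tourEdges σ \ F) + #F := by
    have := card_sdiff_add_card_inter (tourEdges σ) F
    rw [hσ.card_tourEdges hV] at this
    omega
  refine hlt.not_ge ?_
  calc (Fintype.card V + 1 - #F) * h ≤ #(tourEdges σ \ F) * h := by
        gcongr
        rw [sub_le_iff_le_add]
        exact_mod_cast hcard
    _ = ∑ _e ∈ tourEdges σ \ F, h := by rw [sum_const, nsmul_eq_mul]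
    _ ≤ ∑ e ∈ tourEdges σ \ F, w e := sum_le_sum fun e he => hF e (mem_sdiff.1 he).2
    _ ≤ tourWeight w σ := sum_le_sum_of_subset_of_nonneg sdiff_subset fun e _ _ => hw e

theorem improvingKSwap_congr_left {σ' τ : Equiv.Perm V} (h : tourEdges σ = tourEdges σ')
    (w : Sym2 V → ℝ) (k : ℕ) : ImprovingKSwap w k σ τ ↔ ImprovingKSwap w k σ' τ := by
  simp only [ImprovingKSwap, IsKSwap, tourWeight, h]

end Tours

section Transport

variable {U : Type*} [Fintype U] [DecidableEq U] (e : V ≃ U)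

theorem IsTour.permCongr {σ : Equiv.Perm V} (hσ : IsTour σ) : IsTour (e.permCongr σ) := by
  obtain ⟨u, -⟩ := id hσ.1
  refine isTour_of_sameCycle (u := e u) (fun v => ?_) fun v => ?_
  · simpa [← e.eq_symm_apply] using hσ.apply_ne (e.symm v)
  · rw [← e.apply_symm_apply v]
    refine hσ.induction_on (p := fun x => (e.permCongr σ).SameCycle (e u) (e x)) .rfl
      (fun x hx => ?_) (e.symm v)
    simpa using Equiv.Perm.sameCycle_apply_right.2 hx

theorem isTour_permCongr {σ : Equiv.Perm V} : IsTour (e.permCongr σ) ↔ IsTour σ :=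
  ⟨fun h => by simpa [← Equiv.permCongr_symm] using h.permCongr e.symm, fun h => h.permCongr e⟩

theorem tourEdges_permCongr (σ : Equiv.Perm V) :
    tourEdges (e.permCongr σ) = (tourEdges σ).image (Sym2.map e) := by
  simp only [tourEdges, image_image]
  rw [← image_univ_equiv e, image_image]
  simp [Function.comp_def]

theorem tourWeight_permCongr (w : Sym2 U → ℝ) (σ : Equiv.Perm V) :
    tourWeight w (e.permCongr σ) = tourWeight (w ∘ Sym2.map e) σ := by
  rw [tourWeight, tourEdges_permCongr, sum_image (Sym2.map.injective e.injective).injOn]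
  rfl

theorem improvingKSwap_permCongr (w : Sym2 U → ℝ) (k : ℕ) (σ τ : Equiv.Perm V) :
    ImprovingKSwap w k (e.permCongr σ) (e.permCongr τ) ↔
      ImprovingKSwap (w ∘ Sym2.map e) k σ τ := by
  have hinj := Sym2.map.injective e.injective
  simp only [ImprovingKSwap, IsKSwap, isTour_permCongr, tourWeight_permCongr,
    tourEdges_permCongr, ← image_sdiff _ _ hinj, card_image_of_injective _ hinj]

theorem isLocalOpt_permCongr (w : Sym2 U → ℝ) (k : ℕ) (σ : Equiv.Perm V) :
    IsLocalOpt w k (e.permCongr σ) ↔ IsLocalOpt (w ∘ Sym2.map e) k σ := by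
  simp only [IsLocalOpt, e.permCongr.surjective.forall, improvingKSwap_permCongr]

theorem improvingSwapSeq_map_permCongr (w : Sym2 U → ℝ) (k : ℕ) (σ : Equiv.Perm V)
    (l : List (Equiv.Perm V)) :
    ImprovingSwapSeq w k (e.permCongr σ) (l.map e.permCongr) ↔
      ImprovingSwapSeq (w ∘ Sym2.map e) k σ l := by
  induction l generalizing σ with
  | nil => rfl
  | cons τ l ih => simp only [List.map_cons, ImprovingSwapSeq, improvingKSwap_permCongr, ih]

theorem maximalImprovingSwapSeq_map_permCongr (w : Sym2 U → ℝ) (k : ℕ) (σ : Equiv.Perm V)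
    (l : List (Equiv.Perm V)) :
    MaximalImprovingSwapSeq w k (e.permCongr σ) (l.map e.permCongr) ↔
      MaximalImprovingSwapSeq (w ∘ Sym2.map e) k σ l := by
  simp only [MaximalImprovingSwapSeq, improvingSwapSeq_map_permCongr, ← List.map_cons,
    List.getLast_map, isLocalOpt_permCongr]

end Transport

section LongSequences

theorem le_add_length_mul_of_maximalImprovingSwapSeq {w : Sym2 V → ℝ} {k B M : ℕ}
    {P : ℕ → Equiv.Perm V → Prop}
    (hstep : ∀ p σ τ, P p σ → ImprovingKSwap w k σ τ → P (p + B) τ)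
    (hopt : ∀ p σ, P p σ → IsLocalOpt w k σ → M ≤ p) {l : List (Equiv.Perm V)}
    {p : ℕ} {σ : Equiv.Perm V} (hσ : P p σ) (hl : MaximalImprovingSwapSeq w k σ l) :
    M ≤ p + l.length * B := by
  induction l generalizing p σ with
  | nil => simpa using hopt p σ hσ hl.2
  | cons τ l ih =>
    obtain ⟨⟨hswap, hseq⟩, hlast⟩ := hl
    have := ih (hstep p σ τ hσ hswap) ⟨hseq, by simpa using hlast⟩
    rw [List.length_cons]
    linarith

theorem TSPKOptAllExp.of_card_le_mul {k D q₀ : ℕ}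
    (h : ∀ q ≥ q₀, ∃ (U : Type) (_ : Fintype U) (_ : DecidableEq U) (w : Sym2 U → ℝ)
      (τ₀ : Equiv.Perm U), q ≤ Fintype.card U ∧ Fintype.card U ≤ D * q ∧ (∀ e, 0 ≤ w e) ∧
        IsTour τ₀ ∧ ∀ l, MaximalImprovingSwapSeq w k τ₀ l → 2 ^ q ≤ l.length) :
    TSPKOptAllExp k := by
  have hD : D ≠ 0 := by
    rintro rfl
    obtain ⟨U, _, _, -, -, hlo, hhi, -⟩ := h (q₀ + 1) (by omega)
    omega
  have hc : 1 < (2 : ℝ) ^ (D : ℝ)⁻¹ := Real.one_lt_rpow (by norm_num) (by positivity)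
  refine ⟨(2 : ℝ) ^ (D : ℝ)⁻¹, hc, fun N => ?_⟩
  obtain ⟨U, _, _, w, τ₀, hlo, hhi, hw, hτ₀, hlen⟩ := h (max q₀ N) (le_max_left _ _)
  let e : U ≃ Fin (Fintype.card U) := Fintype.equivFin U
  refine ⟨Fintype.card U, (le_max_right _ _).trans hlo, w ∘ Sym2.map e.symm, e.permCongr τ₀,
    fun _ => hw _, hτ₀.permCongr e, fun l hl => ?_⟩
  have hl' : MaximalImprovingSwapSeq w k τ₀ (l.map e.symm.permCongr) := by
    simpa [← Equiv.permCongr_symm] using (maximalImprovingSwapSeq_map_permCongr e.symm w k _ l).2 hl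
  calc ((2 : ℝ) ^ (D : ℝ)⁻¹) ^ Fintype.card U ≤ ((2 : ℝ) ^ (D : ℝ)⁻¹) ^ (D * max q₀ N) :=
        pow_le_pow_right₀ hc.le hhi
    _ = 2 ^ max q₀ N := by rw [pow_mul, Real.rpow_inv_natCast_pow (by norm_num) hD]
    _ ≤ l.length := by simpa using Nat.cast_le (α := ℝ).2 (hlen _ hl')

end LongSequences

section AlternatingTours

variable {P : Type*}

/-- The permutation of `P ⊕ P` that alternates between the matching edges `s(inl b, inr (μ b))`
and the edges `s(inr t, inl (f t))`. Think of `inl` and `inr` as the exit and the entry of a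
position in `P`, where `f` is fixed and the matching `μ` varies. -/
def alternatingPerm (μ f : Equiv.Perm P) : Equiv.Perm (P ⊕ P) :=
  (Equiv.sumCongr μ f).trans (Equiv.sumComm P P)

@[simp]
theorem alternatingPerm_inl (μ f : Equiv.Perm P) (b : P) :
    alternatingPerm μ f (Sum.inl b) = Sum.inr (μ b) := rfl

@[simp]
theorem alternatingPerm_inr (μ f : Equiv.Perm P) (t : P) :
    alternatingPerm μ f (Sum.inr t) = Sum.inl (f t) := rfl

/-- The symmetric weight function on `P ⊕ P` giving `s(inl b, inr t)` the weight `c b t`, and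
the weight `B` to every edge inside one of the two copies of `P`. -/
def bipartiteWeight (c : P → P → ℝ) (B : ℝ) : Sym2 (P ⊕ P) → ℝ :=
  Sym2.lift ⟨fun u v => match u, v with
    | Sum.inl b, Sum.inr t => c b t
    | Sum.inr t, Sum.inl b => c b t
    | _, _ => B, by rintro (_ | _) (_ | _) <;> rfl⟩

@[simp]
theorem bipartiteWeight_inl_inr (c : P → P → ℝ) (B : ℝ) (b t : P) :
    bipartiteWeight c B s(Sum.inl b, Sum.inr t) = c b t := rfl

@[simp]
theorem bipartiteWeight_inr_inl (c : P → P → ℝ) (B : ℝ) (b t : P) :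
    bipartiteWeight c B s(Sum.inr t, Sum.inl b) = c b t := rfl

@[simp]
theorem bipartiteWeight_inl_inl (c : P → P → ℝ) (B : ℝ) (b b' : P) :
    bipartiteWeight c B s(Sum.inl b, Sum.inl b') = B := rfl

@[simp]
theorem bipartiteWeight_inr_inr (c : P → P → ℝ) (B : ℝ) (t t' : P) :
    bipartiteWeight c B s(Sum.inr t, Sum.inr t') = B := rfl

theorem bipartiteWeight_nonneg {c : P → P → ℝ} {B : ℝ} (hc : ∀ b t, 0 ≤ c b t) (hB : 0 ≤ B)
    (e : Sym2 (P ⊕ P)) : 0 ≤ bipartiteWeight c B e := by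
  induction e with
  | _ u v => rcases u with u | u <;> rcases v with v | v <;> simp [hc, hB]

theorem three_le_card_sum_self [Fintype P] (hP : 2 ≤ Fintype.card P) :
    3 ≤ Fintype.card (P ⊕ P) := by
  rw [Fintype.card_sum]
  omega

variable [Fintype P] [DecidableEq P] {μ f : Equiv.Perm P}

theorem mk_inl_inr_mem_tourEdges_alternatingPerm {b t : P} :
    s(Sum.inl b, Sum.inr t) ∈ tourEdges (alternatingPerm μ f) ↔ μ b = t ∨ f t = b := by
  simp [mk_mem_tourEdges]

theorem mem_tourEdges_alternatingPerm {e : Sym2 (P ⊕ P)} :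
    e ∈ tourEdges (alternatingPerm μ f) ↔
      ∃ b t, (μ b = t ∨ f t = b) ∧ e = s(Sum.inl b, Sum.inr t) := by
  constructor
  · intro he
    obtain ⟨b | t, -, rfl⟩ := mem_image.1 he
    · exact ⟨b, μ b, .inl rfl, rfl⟩
    · exact ⟨f t, t, .inr rfl, Sym2.eq_swap⟩
  · rintro ⟨b, t, h, rfl⟩
    exact mk_inl_inr_mem_tourEdges_alternatingPerm.2 h

theorem tourWeight_alternatingPerm (hP : 2 ≤ Fintype.card P)
    (h : IsTour (alternatingPerm μ f)) (c : P → P → ℝ) (B : ℝ) :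
    tourWeight (bipartiteWeight c B) (alternatingPerm μ f) =
      ∑ b, c b (μ b) + ∑ t, c (f t) t := by
  simp [h.tourWeight_eq_sum (three_le_card_sum_self hP)]

theorem IsTour.eq_alternatingPerm {σ : Equiv.Perm (P ⊕ P)} (hσ : IsTour σ)
    (hP : 2 ≤ Fintype.card P) (hf : ∀ t, s(Sum.inr t, Sum.inl (f t)) ∈ tourEdges σ)
    (hbip : ∀ b b', s(Sum.inl b, Sum.inl b') ∉ tourEdges σ) {t₀ : P}
    (h₀ : σ (Sum.inr t₀) = Sum.inl (f t₀)) : ∃ μ, σ = alternatingPerm μ f := by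
  have hinl : ∀ b, ∃ t, σ (Sum.inl b) = Sum.inr t := fun b => by
    rcases hb : σ (Sum.inl b) with b' | t
    · exact absurd (mk_mem_tourEdges.2 (.inl hb)) (hbip b b')
    · exact ⟨t, rfl⟩
  choose g hg using hinl
  have hinr : ∀ t, σ (Sum.inr t) = Sum.inl (f t) := by
    -- Walking along `σ` from `t₀`, every fixed edge is traversed in the direction of `f`.
    let Forward : P ⊕ P → Prop :=
      Sum.elim (fun b => σ (Sum.inr (f.symm b)) = Sum.inl b) fun t => σ (Sum.inr t) = Sum.inl (f t)
    refine fun t => hσ.induction_on (p := Forward) (u := Sum.inr t₀) h₀ ?_ (Sum.inr t)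
    rintro (b | t) hforward
    · rw [hg]
      rcases mk_mem_tourEdges.1 (hf (g b)) with h | h
      · exact h
      · have hb : f (g b) = b := Sum.inl_injective (σ.injective (h.trans (hg b).symm))
        have hgb : f.symm b = g b := by rw [f.symm_apply_eq, hb]
        refine absurd ?_ (hσ.apply_apply_ne (three_le_card_sum_self hP) (Sum.inl b))
        rw [hg, ← hgb]
        exact hforward
    · have hforward : σ (Sum.inr t) = Sum.inl (f t) := hforward
      simp [Forward, hforward]
  have hg_inj : Function.Injective g := fun a b hab =>
    Sum.inl_injective (σ.injective (by rw [hg, hg, hab]))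
  refine ⟨Equiv.ofBijective g hg_inj.bijective_of_finite, ?_⟩
  ext (b | t)
  · rw [hg]
    rfl
  · rw [hinr, alternatingPerm_inr]

theorem IsTour.exists_tourEdges_alternatingPerm_eq {σ : Equiv.Perm (P ⊕ P)} (hσ : IsTour σ)
    (hP : 2 ≤ Fintype.card P) (hf : ∀ t, s(Sum.inr t, Sum.inl (f t)) ∈ tourEdges σ)
    (hbip : ∀ b b', s(Sum.inl b, Sum.inl b') ∉ tourEdges σ) :
    ∃ μ, IsTour (alternatingPerm μ f) ∧ tourEdges (alternatingPerm μ f) = tourEdges σ := by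
  obtain ⟨t₀⟩ : Nonempty P := Fintype.card_pos_iff.1 (by omega)
  rcases mk_mem_tourEdges.1 (hf t₀) with h₀ | h₀
  · obtain ⟨μ, rfl⟩ := hσ.eq_alternatingPerm hP hf hbip h₀
    exact ⟨μ, hσ, rfl⟩
  · have h₀' : σ⁻¹ (Sum.inr t₀) = Sum.inl (f t₀) := by simp [← h₀]
    obtain ⟨μ, hμ⟩ := hσ.inv.eq_alternatingPerm hP (by rwa [tourEdges_inv])
      (by rwa [tourEdges_inv]) h₀'
    exact ⟨μ, hμ ▸ hσ.inv, by rw [← hμ, tourEdges_inv]⟩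

theorem IsTour.exists_alternatingPerm_of_tourWeight_lt {σ : Equiv.Perm (P ⊕ P)}
    (hσ : IsTour σ) (hP : 2 ≤ Fintype.card P) {c : P → P → ℝ} {h B : ℝ} (h_nonneg : 0 ≤ h)
    (hB : B = (Fintype.card P + 1) * h) (hc : ∀ b t, 0 ≤ c b t)
    (hcf : ∀ b t, b ≠ f t → h ≤ c b t) (hlt : tourWeight (bipartiteWeight c B) σ < B) :
    ∃ μ, IsTour (alternatingPerm μ f) ∧ tourEdges (alternatingPerm μ f) = tourEdges σ := by
  have hhB : h ≤ B := by
    rw [hB]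
    nlinarith [(Fintype.card P).cast_nonneg (α := ℝ)]
  have hw := bipartiteWeight_nonneg hc (h_nonneg.trans hhB)
  let F : Finset (Sym2 (P ⊕ P)) := univ.image fun t => s(Sum.inr t, Sum.inl (f t))
  have hF_card : #F ≤ Fintype.card P := card_image_le
  have hF_out : ∀ e ∉ F, h ≤ bipartiteWeight c B e := by
    have hne : ∀ {b t : P}, s(Sum.inl b, Sum.inr t) ∉ F → h ≤ c b t := fun {b t} he =>
      hcf b t fun hb => he (mem_image.2 ⟨t, mem_univ t, by rw [hb, Sym2.eq_swap]⟩)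
    rintro ⟨b | t, b' | t'⟩ he
    · exact hhB
    · exact hne he
    · exact hne (by rwa [Sym2.eq_swap])
    · exact hhB
  have hF_sub : F ⊆ tourEdges σ := by
    refine hσ.subset_tourEdges_of_tourWeight_lt (three_le_card_sum_self hP) hw h_nonneg hF_out
      (hlt.trans_le ?_)
    rw [hB, Fintype.card_sum]
    gcongr
    have : (#F : ℝ) ≤ Fintype.card P := mod_cast hF_card
    push_cast
    linarith
  exact hσ.exists_tourEdges_alternatingPerm_eq hP
    (fun t => hF_sub (mem_image_of_mem _ (mem_univ t)))
    fun b b' he => hlt.not_ge (le_tourWeight hw he)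

end AlternatingTours

section StateTours

variable {S : Type*} [DecidableEq S] {R : ℕ}

/-- The permutation moving the position `(i, s i)` to `(i + 1, s (i + 1))` for every layer `i`,
cyclically, and fixing all other positions. The function `s` lists one state per layer. -/
def stateShift (s : Fin (R + 1) → S) : Equiv.Perm (Fin (R + 1) × S) where
  toFun b := if b.2 = s b.1 then (b.1 + 1, s (b.1 + 1)) else b
  invFun b := if b.2 = s b.1 then (b.1 - 1, s (b.1 - 1)) else b
  left_inv b := by
    dsimp only
    split_ifs with h
    · simp [Prod.ext_iff, h]
    · simp_all
    · rfl
  right_inv b := by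
    dsimp only
    split_ifs with h
    · simp [Prod.ext_iff, h]
    · simp_all
    · rfl

theorem stateShift_apply_self (s : Fin (R + 1) → S) (i : Fin (R + 1)) :
    stateShift s (i, s i) = (i + 1, s (i + 1)) := if_pos rfl

theorem stateShift_apply_of_ne {s : Fin (R + 1) → S} {i : Fin (R + 1)} {x : S} (hx : x ≠ s i) :
    stateShift s (i, x) = (i, x) := if_neg hx

theorem exists_eq_stateShift {μ : Equiv.Perm (Fin (R + 1) × S)}
    (hμ : ∀ b, μ b ≠ b → (μ b).1 = b.1 + 1) (h₀ : ∃! x, μ (0, x) ≠ (0, x)) :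
    ∃ s, μ = stateShift s := by
  have hnext : ∀ i x, μ (i, x) ≠ (i, x) →
      ∃ y, μ (i, x) = (i + 1, y) ∧ μ (i + 1, y) ≠ (i + 1, y) := fun i x hx => by
    have hy : μ (i, x) = (i + 1, (μ (i, x)).2) := Prod.ext (hμ _ hx) rfl
    exact ⟨_, hy, hy ▸ fun h => hx (μ.injective h)⟩
  have hprev : ∀ i y, μ (i + 1, y) ≠ (i + 1, y) →
      ∃ x, μ (i, x) = (i + 1, y) ∧ μ (i, x) ≠ (i, x) := fun i y hy => by
    obtain ⟨⟨j, x⟩, hx⟩ := μ.surjective (i + 1, y)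
    have hmoved : μ (j, x) ≠ (j, x) := fun h => hy (by rwa [← h.symm.trans hx])
    obtain rfl : i = j := by simpa [hx] using hμ _ hmoved
    exact ⟨x, hx, hmoved⟩
  have hunique : ∀ i, ∃! x, μ (i, x) ≠ (i, x) := fun i => by
    induction i using Fin.induction with
    | zero => exact h₀
    | succ i ih =>
      obtain ⟨x, hx, hx_unique⟩ := ih
      rw [← Fin.coeSucc_eq_succ]
      obtain ⟨y, hxy, hy⟩ := hnext _ x hx
      refine ⟨y, hy, fun y' hy' => ?_⟩
      obtain ⟨x', hxy', hx'⟩ := hprev _ y' hy'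
      simpa [hx_unique x' hx', hxy, eq_comm] using hxy'
  choose s hs hs_unique using hunique
  refine ⟨s, Equiv.ext fun ⟨i, x⟩ => ?_⟩
  by_cases hx : μ (i, x) = (i, x)
  · rw [hx, stateShift_apply_of_ne]
    rintro rfl
    exact hs i hx
  · obtain ⟨y, hxy, hy⟩ := hnext i x hx
    rw [hxy, hs_unique i x hx, hs_unique _ y hy, stateShift_apply_self]

/-- The permutation applying `ρ` inside every layer. -/
def layerwise (R : ℕ) (ρ : Equiv.Perm S) : Equiv.Perm (Fin (R + 1) × S) :=
  Equiv.prodCongr (Equiv.refl _) ρ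

/-- The tour that runs through every layer `i` along the cycle `ρ`, leaving it at the state
`s i` for the state `s (i + 1)` of the next layer. -/
def stateTour (ρ : Equiv.Perm S) (s : Fin (R + 1) → S) :
    Equiv.Perm ((Fin (R + 1) × S) ⊕ (Fin (R + 1) × S)) :=
  alternatingPerm (stateShift s) (layerwise R ρ)

variable [Fintype S] {ρ : Equiv.Perm S} {s s' : Fin (R + 1) → S}

theorem sameCycle_stateTour_layer (hρ : IsTour ρ) (i : Fin (R + 1)) (x : S) :
    (stateTour ρ s).SameCycle (Sum.inr (i, s i)) (Sum.inr (i, x)) := by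
  refine hρ.induction_on (u := s i)
    (p := fun x => (stateTour ρ s).SameCycle (Sum.inr (i, s i)) (Sum.inr (i, x))) .rfl
    (fun x hx => ?_) x
  by_cases h : ρ x = s i
  · rw [h]
  · have hnext : stateTour ρ s (stateTour ρ s (Sum.inr (i, x))) = Sum.inr (i, ρ x) := by
      simp [stateTour, layerwise, stateShift_apply_of_ne h]
    rw [← hnext]
    exact Equiv.Perm.sameCycle_apply_right.2 (Equiv.Perm.sameCycle_apply_right.2 hx)

theorem isTour_stateTour (hρ : IsTour ρ) (s : Fin (R + 1) → S) : IsTour (stateTour ρ s) := by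
  set σ := stateTour ρ s with hσ
  have hlayer : ∀ i, σ.SameCycle (Sum.inr (0, s 0)) (Sum.inr (i, s i)) := fun i => by
    induction i using Fin.induction with
    | zero => exact .rfl
    | succ i ih =>
      have hexit : σ (Sum.inr (i.castSucc, ρ.symm (s i.castSucc))) =
          Sum.inl (i.castSucc, s i.castSucc) := by simp [hσ, stateTour, layerwise]
      have hentry : σ (Sum.inl (i.castSucc, s i.castSucc)) = Sum.inr (i.succ, s i.succ) := by
        simp [hσ, stateTour, stateShift_apply_self]
      rw [← hentry, ← hexit]
      exact Equiv.Perm.sameCycle_apply_right.2 (Equiv.Perm.sameCycle_apply_right.2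
        (ih.trans (sameCycle_stateTour_layer hρ _ _)))
  have hinr : ∀ b, σ.SameCycle (Sum.inr (0, s 0)) (Sum.inr b) := fun b =>
    (hlayer b.1).trans (sameCycle_stateTour_layer hρ b.1 b.2)
  refine isTour_of_sameCycle (u := Sum.inr (0, s 0)) (by rintro (b | b) <;> simp [hσ, stateTour]) ?_
  rintro (b | b)
  · exact Equiv.Perm.sameCycle_apply_right.1 (by simpa [hσ, stateTour] using hinr (stateShift s b))
  · exact hinr b

theorem card_tourEdges_stateTour_sdiff_le (ρ : Equiv.Perm S) (j : Fin (R + 1))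
    (h : ∀ i ≠ j, s i = s' i) :
    #(tourEdges (stateTour ρ s) \ tourEdges (stateTour ρ s')) ≤ 3 := by
  let moved : Finset (Fin (R + 1) × S) := {(j - 1, s (j - 1)), (j, s j), (j, s' j)}
  calc #(tourEdges (stateTour ρ s) \ tourEdges (stateTour ρ s'))
      ≤ #(moved.image fun b => s(Sum.inl b, Sum.inr (stateShift s b))) := card_le_card ?_
    _ ≤ #moved := card_image_le
    _ ≤ 3 := card_le_three
  intro e he
  obtain ⟨he, he'⟩ := mem_sdiff.1 he
  obtain ⟨b, t, hbt, rfl⟩ := mem_tourEdges_alternatingPerm.1 he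
  have hne : stateShift s' b ≠ t ∧ layerwise R ρ t ≠ b := by
    simpa [stateTour, mk_inl_inr_mem_tourEdges_alternatingPerm] using he'
  obtain rfl := hbt.resolve_right hne.2
  refine mem_image_of_mem (fun b => s(Sum.inl b, Sum.inr (stateShift s b))) ?_
  by_contra hb
  obtain ⟨i, x⟩ := b
  refine hne.1 ?_
  simp only [moved, mem_insert, mem_singleton, Prod.mk.injEq, not_or, not_and] at hb
  simp only [stateShift, Equiv.coe_fn_mk]
  grind

theorem card_filter_ne_le_card_tourEdges_sdiff (hR : R ≠ 0) (hρ : ∀ x, ρ x ≠ x) :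
    #{i | s i ≠ s' i} ≤ #(tourEdges (stateTour ρ s) \ tourEdges (stateTour ρ s')) := by
  -- In a changed layer, the first tour passes straight through the position from which the
  -- second tour hops to the next layer.
  refine card_le_card_of_injOn (fun i => s(Sum.inl (i, s' i), Sum.inr (i, s' i))) ?_ ?_
  · intro i hi
    have hi : s' i ≠ s i := by simpa using (mem_filter.1 hi).2.symm
    have hsucc : i + 1 ≠ i := by simp [hR]
    simp [stateTour, mk_inl_inr_mem_tourEdges_alternatingPerm, stateShift_apply_of_ne hi,
      stateShift_apply_self, layerwise, hsucc, hρ]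
  · intro i _ j _ hij
    simp_all

end StateTours

section RedundantBinary

/-- The value of the first `i` digits of `d`, most significant digit first, in the redundant
binary number system with digits `0`, `1`, `2`. -/
def prefixValue (d : ℕ → Fin 3) : ℕ → ℕ
  | 0 => 0
  | i + 1 => 2 * prefixValue d i + d i

/-- The digit sequence obtained by adding one to digit `j` and clearing digit `j + 1`. This is a
carry when digit `j + 1` is `2`; it is only meant for `d j ≠ 2`. -/
def carry (d : ℕ → Fin 3) (j : ℕ) : ℕ → Fin 3 := fun i =>
  if i = j then d j + 1 else if i = j + 1 then 0 else d i

/-- The total deficit of the first `R` digits from the largest digit `2`, where digit `i` has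
the weight `3 ^ (R - i)`. Carries lower it, as the weights are ternary and not binary. -/
def penalty (R : ℕ) (d : ℕ → Fin 3) : ℕ :=
  ∑ i ∈ range R, 3 ^ (R - i) * (2 - d i)

variable {R : ℕ} {d : ℕ → Fin 3}

theorem prefixValue_zero : prefixValue 0 = 0 := by
  funext i
  induction i with
  | zero => rfl
  | succ i ih => simp [prefixValue, ih]

theorem prefixValue_add_two_of_forall_eq_two {i : ℕ} (hd : ∀ j < i, d j = 2) :
    prefixValue d i + 2 = 2 ^ (i + 1) := by
  induction i with
  | zero => rfl
  | succ i ih =>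
    have := ih fun j hj => hd j (by omega)
    rw [prefixValue, hd i (by omega), Fin.val_two, pow_succ]
    omega

theorem val_carry_self {j : ℕ} (hj : d j ≠ 2) : (carry d j j : ℕ) = d j + 1 := by
  simp only [carry]
  grind

theorem prefixValue_carry {i j : ℕ} (hj : d j ≠ 2) (hnext : j + 1 < i → d (j + 1) = 2) :
    prefixValue (carry d j) i = prefixValue d i + if i = j + 1 then 1 else 0 := by
  induction i with
  | zero => rfl
  | succ i ih =>
    rw [prefixValue, prefixValue, ih fun h => hnext (by omega)]
    rcases eq_or_ne i j with rfl | hij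
    · simp [val_carry_self hj, add_assoc]
    rcases eq_or_ne i (j + 1) with rfl | hij'
    · simp [carry, hnext, mul_add]
    · simp [carry, hij, hij']

theorem penalty_carry_lt {j : ℕ} (hjR : j < R) (hj : d j ≠ 2)
    (hnext : j + 1 < R → d (j + 1) = 2) : penalty R (carry d j) < penalty R d := by
  have hterm : ∀ i ∈ range R,
      3 ^ (R - i) * (2 - (carry d j i : ℕ)) + (if i = j then 3 ^ (R - i) else 0) =
        3 ^ (R - i) * (2 - (d i : ℕ)) + if i = j + 1 then 3 ^ (R - i) * 2 else 0 := fun i hi => by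
    rcases eq_or_ne i j with rfl | hij
    · have hdigit : 2 - (d i : ℕ) = 2 - (d i + 1) + 1 := by grind
      simp [val_carry_self hj, hdigit, mul_add]
    rcases eq_or_ne i (j + 1) with rfl | hij'
    · simp [carry, hnext (mem_range.1 hi)]
    · simp [hij, hij', carry]
  have hsum := sum_congr rfl hterm
  simp only [sum_add_distrib, sum_ite_eq', mem_range, hjR, if_true] at hsum
  have hpow : 3 ^ (R - j) = 3 ^ (R - (j + 1)) * 3 := by rw [← pow_succ]; congr 1; omega
  have hpos : 0 < 3 ^ (R - (j + 1)) := by positivity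
  simp only [penalty]
  split_ifs at hsum <;> omega

theorem penalty_lt (R : ℕ) (d : ℕ → Fin 3) : penalty R d < 3 ^ (R + 1) := by
  have hgeom : ∑ i ∈ range R, 3 ^ (R - i) * 2 + 3 = 3 ^ (R + 1) := by
    induction R with
    | zero => rfl
    | succ R ih =>
      rw [sum_range_succ']
      simp only [Nat.add_sub_add_right, Nat.sub_zero, pow_succ _ (R + 1)]
      omega
  have hle : penalty R d ≤ ∑ i ∈ range R, 3 ^ (R - i) * 2 := by
    unfold penalty
    gcongr
    omega
  omega

theorem exists_last_digit_ne_two (hd : ¬ ∀ j < R, d j = 2) :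
    ∃ j < R, d j ≠ 2 ∧ (j + 1 < R → d (j + 1) = 2) := by
  push Not at hd
  obtain ⟨i, hiR, hi⟩ := hd
  obtain ⟨j, hj, hmax⟩ := exists_max_image {j ∈ range R | d j ≠ 2} id
    ⟨i, mem_filter.2 ⟨mem_range.2 hiR, hi⟩⟩
  rw [mem_filter, mem_range] at hj
  refine ⟨j, hj.1, hj.2, fun hjR => ?_⟩
  by_contra hj'
  simpa using hmax (j + 1) (mem_filter.2 ⟨mem_range.2 hjR, hj'⟩)

-- An `x i` below `N` in absolute value that is divisible by `N` vanishes; so the bound doubles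
-- at the indices that are counted, and starts afresh at the others.
theorem abs_add_two_le_two_pow_count {x : ℕ → ℤ} (h₀ : x 0 = 0)
    (hx : ∀ i, |x (i + 1) - 2 * x i| ≤ 2) {N : ℤ} (i : ℕ)
    (hN : 2 ^ (Nat.count (fun j => ¬ N ∣ x j) (i + 1) + 2) ≤ N) :
    |x i| + 2 ≤ 2 ^ (Nat.count (fun j => ¬ N ∣ x j) (i + 1) + 1) := by
  induction i with
  | zero => simp [Nat.count_succ, h₀]
  | succ i ih =>
    rw [Nat.count_succ] at hN ⊢
    set C := Nat.count (fun j => ¬ N ∣ x j) (i + 1)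
    have hx := abs_le.1 (hx i)
    have hpow : (2 : ℤ) ^ (C + 2) = 2 ^ (C + 1) * 2 := pow_succ ..
    by_cases hdvd : N ∣ x (i + 1)
    · simp only [hdvd, not_true_eq_false, if_false, add_zero] at hN ⊢
      have hlt : |x (i + 1)| < N := by grind
      rw [Int.eq_zero_of_abs_lt_dvd hdvd hlt, abs_zero, zero_add]
      exact le_self_pow₀ one_le_two (by omega)
    · simp only [hdvd, not_false_eq_true, if_true] at hN ⊢
      have ih := ih ((pow_le_pow_right₀ one_le_two (by omega)).trans hN)
      rw [add_right_comm, add_assoc, hpow]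
      grind

theorem prefixValue_le_add_two_pow {k N : ℕ} (hN : 2 ^ (k + 2) ≤ N) {d d' : ℕ → Fin 3}
    (hk : #{i : Fin (R + 1) | (prefixValue d i : ZMod N) ≠ prefixValue d' i} ≤ k) :
    prefixValue d' R ≤ prefixValue d R + 2 ^ (k + 1) := by
  let x : ℕ → ℤ := fun i => prefixValue d' i - prefixValue d i
  have hcount : Nat.count (fun i => ¬ (N : ℤ) ∣ x i) (R + 1) ≤ k := by
    refine hk.trans_eq' ?_
    simp only [Nat.count_eq_card_filter_range, card_filter, sum_range]
    simp [x, ← ZMod.intCast_zmod_eq_zero_iff_dvd, sub_eq_zero, eq_comm]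
  have hx : ∀ i, |x (i + 1) - 2 * x i| ≤ 2 := fun i => by
    simp only [x, prefixValue, abs_le]
    omega
  have hN : (2 : ℤ) ^ (k + 2) ≤ N := mod_cast hN
  have h := abs_add_two_le_two_pow_count (x := x) (by simp [x, prefixValue]) hx R
    ((pow_le_pow_right₀ one_le_two (Nat.add_le_add_right hcount 2)).trans hN)
  have hpow : (2 : ℤ) ^ _ ≤ 2 ^ (k + 1) :=
    pow_le_pow_right₀ one_le_two (Nat.add_le_add_right hcount 1)
  have := le_abs_self (x R)
  zify
  grind

end RedundantBinary

section CounterInstance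

variable {R N : ℕ}

/-- The positions of the instance: a layer and a residue modulo `N`. Every position contributes
two vertices, its exit `inl` and its entry `inr`. -/
abbrev CounterPosition (R N : ℕ) : Type := Fin (R + 1) × ZMod N

/-- The hops of the counter: from layer `i` to the next layer with `x ↦ 2 * x + d` for a digit
`d ≤ 2`, and from the last layer back to the residue `0` of layer `0`. -/
def IsHop (b t : CounterPosition R N) : Prop :=
  t.1 = b.1 + 1 ∧ if b.1 = Fin.last R then t.2 = 0 else (t.2 - 2 * b.2).val ≤ 2

instance (b t : CounterPosition R N) : Decidable (IsHop b t) := by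
  unfold IsHop
  infer_instance

/-- The summand of the penalty that is contributed by a hop. -/
def hopPenalty (b t : CounterPosition R N) : ℕ :=
  if b.1 = Fin.last R then 0 else 3 ^ (R - b.1) * (2 - (t.2 - 2 * b.2).val)

/-- A cost exceeding the weight of every tour that encodes a digit sequence, where each of the
`(R + 1) * N` positions costs `3 ^ (R + 1)` and the penalty is less than `3 ^ (R + 1)`. -/
def prohibitiveCost (R N : ℕ) : ℕ := ((R + 1) * N + 1) * 3 ^ (R + 1)

/-- The cost of the edge from the exit of `b` to the entry of `t`. The free edges lead to the
previous residue of the same layer; denying `(0, 0)` the shortcut from its exit to its own entry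
forces layer `0` to be left at the residue `0`. -/
def counterCost (b t : CounterPosition R N) : ℕ :=
  if b = layerwise R (Equiv.addRight 1) t then 0
  else if b = t ∧ b ≠ (0, 0) then 3 ^ (R + 1)
  else if IsHop b t then 3 ^ (R + 1) + hopPenalty b t
  else prohibitiveCost R N

/-- The weight function of the TSP instance. -/
def counterWeight (R N : ℕ) :
    Sym2 (CounterPosition R N ⊕ CounterPosition R N) → ℝ :=
  bipartiteWeight (fun b t => counterCost b t) (prohibitiveCost R N)

/-- The states of the digit sequence `d`: the values of its prefixes modulo `N`. -/
def digitState (R N : ℕ) (d : ℕ → Fin 3) : Fin (R + 1) → ZMod N := fun i => prefixValue d i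

/-- The tour encoding the digit sequence `d`. -/
def counterTour (R N : ℕ) (d : ℕ → Fin 3) :
    Equiv.Perm (CounterPosition R N ⊕ CounterPosition R N) :=
  stateTour (Equiv.addRight 1) (digitState R N d)

theorem counterWeight_nonneg (R N : ℕ) (e) : 0 ≤ counterWeight R N e :=
  bipartiteWeight_nonneg (fun _ _ => Nat.cast_nonneg _) (Nat.cast_nonneg _) e

theorem counterCost_layerwise (t : CounterPosition R N) :
    counterCost (layerwise R (Equiv.addRight 1) t) t = 0 := if_pos rfl

theorem le_counterCost {b t : CounterPosition R N} (h : b ≠ layerwise R (Equiv.addRight 1) t) :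
    3 ^ (R + 1) ≤ counterCost b t := by
  have : 3 ^ (R + 1) ≤ prohibitiveCost R N := Nat.le_mul_of_pos_left _ (Nat.succ_pos _)
  simp only [counterCost, if_neg h]
  split_ifs <;> omega

theorem eq_self_or_isHop_of_counterCost_lt {b t : CounterPosition R N}
    (h : b ≠ layerwise R (Equiv.addRight 1) t) (hlt : counterCost b t < prohibitiveCost R N) :
    t = b ∧ b ≠ (0, 0) ∨ IsHop b t := by
  simp only [counterCost, if_neg h] at hlt
  split_ifs at hlt with hself hhop
  · exact .inl ⟨hself.1.symm, hself.2⟩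
  · exact .inr hhop
  · exact absurd hlt (lt_irrefl _)

theorem val_prefixValue_succ_sub (hN : 3 ≤ N) (d : ℕ → Fin 3) (i : ℕ) :
    ((prefixValue d (i + 1) : ZMod N) - 2 * (prefixValue d i : ZMod N)).val = d i := by
  rw [prefixValue, Nat.cast_add, Nat.cast_mul, Nat.cast_ofNat, add_sub_cancel_left,
    ZMod.val_natCast_of_lt (by omega)]

theorem isHop_digitState (hN : 3 ≤ N) (d : ℕ → Fin 3) (i : Fin (R + 1)) :
    IsHop (i, digitState R N d i) (i + 1, digitState R N d (i + 1)) := by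
  induction i using Fin.lastCases with
  | last => simp [IsHop, digitState, prefixValue]
  | cast i =>
    simp only [IsHop, digitState, Fin.coeSucc_eq_succ, true_and, if_neg i.castSucc_ne_last,
      Fin.val_succ, Fin.val_castSucc, val_prefixValue_succ_sub hN]
    omega

theorem sum_hopPenalty_digitState (hN : 3 ≤ N) (d : ℕ → Fin 3) :
    ∑ i, hopPenalty (i, digitState R N d i) (i + 1, digitState R N d (i + 1)) = penalty R d := by
  simp [Fin.sum_univ_castSucc, hopPenalty, digitState, Fin.coeSucc_eq_succ,
    Fin.castSucc_ne_last, val_prefixValue_succ_sub hN, penalty, sum_range]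

theorem exists_eq_digitState [NeZero N] {s : Fin (R + 1) → ZMod N} (h₀ : s 0 = 0)
    (hs : ∀ i : Fin R, (s i.succ - 2 * s i.castSucc).val ≤ 2) : ∃ d, s = digitState R N d := by
  let d : ℕ → Fin 3 := fun i =>
    if hi : i < R then Fin.ofNat 3 (s (Fin.succ ⟨i, hi⟩) - 2 * s (Fin.castSucc ⟨i, hi⟩)).val else 0
  refine ⟨d, funext fun i => ?_⟩
  induction i using Fin.induction with
  | zero => simp [digitState, prefixValue, h₀]
  | succ i ih =>
    have hd : (d i : ℕ) = (s i.succ - 2 * s i.castSucc).val := by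
      simp only [d, dif_pos i.isLt]
      exact Nat.mod_eq_of_lt (Nat.lt_succ_of_le (hs i))
    have ih : s i.castSucc = prefixValue d i := ih
    simp [digitState, prefixValue, hd, ← ih]

theorem isTour_addRight_one [NeZero N] (hN : 2 ≤ N) :
    IsTour (Equiv.addRight (1 : ZMod N)) := by
  have : Fact (1 < N) := ⟨hN⟩
  refine isTour_of_sameCycle (u := 0) (by simp) fun x => ?_
  rw [← ZMod.natCast_zmod_val x]
  induction x.val with
  | zero => rw [Nat.cast_zero]
  | succ n ih => simpa using Equiv.Perm.sameCycle_apply_right.2 ih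

theorem isTour_counterTour [NeZero N] (hN : 2 ≤ N) (d : ℕ → Fin 3) : IsTour (counterTour R N d) :=
  isTour_stateTour (isTour_addRight_one hN) _

theorem counterCost_stateShift_digitState (hR : R ≠ 0) (hN : 3 ≤ N) (d : ℕ → Fin 3)
    (b : CounterPosition R N) :
    counterCost b (stateShift (digitState R N d) b) = 3 ^ (R + 1) +
      if b.2 = digitState R N d b.1 then hopPenalty b (stateShift (digitState R N d) b) else 0 := by
  obtain ⟨i, x⟩ := b
  have hsucc : i + 1 ≠ i := by simp [hR]
  have : Fact (1 < N) := ⟨by omega⟩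
  split_ifs with hx
  · obtain rfl : x = digitState R N d i := hx
    rw [stateShift_apply_self]
    simp [counterCost, layerwise, hsucc.symm, isHop_digitState hN]
  · have hx : x ≠ digitState R N d i := hx
    have h₀ : ¬ (i = 0 ∧ x = 0) := by
      rintro ⟨rfl, rfl⟩
      simp [digitState, prefixValue] at hx
    simp [stateShift_apply_of_ne hx, counterCost, layerwise, h₀]

theorem card_position [NeZero N] : Fintype.card (CounterPosition R N) = (R + 1) * N := by simp

theorem two_le_card_position [NeZero N] (hN : 2 ≤ N) :
    2 ≤ Fintype.card (CounterPosition R N) := by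
  rw [card_position]
  exact hN.trans (Nat.le_mul_of_pos_left _ R.succ_pos)

theorem tourWeight_counterTour [NeZero N] (hR : R ≠ 0) (hN : 3 ≤ N) (d : ℕ → Fin 3) :
    tourWeight (counterWeight R N) (counterTour R N d) =
      ((R + 1) * N * 3 ^ (R + 1) + penalty R d : ℕ) := by
  have hcard := two_le_card_position (R := R) (by omega : 2 ≤ N)
  have hhop : ∑ b : CounterPosition R N, (if b.2 = digitState R N d b.1 then
      hopPenalty b (stateShift (digitState R N d) b) else 0) = penalty R d := by
    simp [Fintype.sum_prod_type, stateShift_apply_self, sum_hopPenalty_digitState hN]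
  have hcost : ∑ b : CounterPosition R N, counterCost b (stateShift (digitState R N d) b) =
      (R + 1) * N * 3 ^ (R + 1) + penalty R d := by
    simp only [counterCost_stateShift_digitState hR hN, sum_add_distrib, hhop, sum_const,
      card_univ, card_position, smul_eq_mul]
  have hweight := tourWeight_alternatingPerm hcard
    (isTour_counterTour (R := R) (by omega : 2 ≤ N) d) (fun b t => counterCost b t)
    (prohibitiveCost R N)
  simp only [counterCost_layerwise, Nat.cast_zero, sum_const_zero, add_zero] at hweight
  rw [← hcost, Nat.cast_sum, ← hweight]
  rfl

theorem tourWeight_counterTour_lt [NeZero N] (hR : R ≠ 0) (hN : 3 ≤ N) (d : ℕ → Fin 3) :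
    tourWeight (counterWeight R N) (counterTour R N d) < prohibitiveCost R N := by
  rw [tourWeight_counterTour hR hN, Nat.cast_lt, prohibitiveCost,
    add_one_mul ((R + 1) * N)]
  exact Nat.add_lt_add_left (penalty_lt R d) _

theorem exists_eq_stateShift_digitState [NeZero N] (hR : R ≠ 0)
    {μ : Equiv.Perm (CounterPosition R N)}
    (hμ : ∀ b, μ b = b ∧ b ≠ (0, 0) ∨ IsHop b (μ b)) : ∃ d, μ = stateShift (digitState R N d) := by
  have hhop : ∀ b, μ b ≠ b → IsHop b (μ b) := fun b hb => (hμ b).resolve_left fun h => hb h.1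
  have hmoved : μ (0, 0) ≠ (0, 0) := fun h => by
    have := ((hμ (0, 0)).resolve_left fun h' => h'.2 rfl).1
    simp [h, hR] at this
  have hunique : ∀ x, μ (0, x) ≠ (0, x) → x = 0 := fun x hx => by
    obtain ⟨⟨i, y⟩, hy⟩ := μ.surjective (0, x)
    obtain ⟨hi, hx'⟩ := hhop (i, y) fun h => hx (by rwa [← h.symm.trans hy])
    rw [hy] at hi hx'
    have hi : i = Fin.last R := by
      rw [← add_left_inj (1 : Fin (R + 1)), ← hi, Fin.last_add_one]
    simpa [hi] using hx'
  obtain ⟨s, rfl⟩ := exists_eq_stateShift (fun b hb => (hhop b hb).1) ⟨0, hmoved, hunique⟩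
  have hs₀ : s 0 = 0 := by
    by_contra h
    exact hmoved (stateShift_apply_of_ne (Ne.symm h))
  have hs : ∀ i : Fin R, (s i.succ - 2 * s i.castSucc).val ≤ 2 := fun i => by
    have h := (hhop (i.castSucc, s i.castSucc) (by
      simp [stateShift_apply_self, i.castSucc_lt_succ.ne'])).2
    simpa [stateShift_apply_self, Fin.coeSucc_eq_succ, i.castSucc_ne_last] using h
  obtain ⟨d, rfl⟩ := exists_eq_digitState hs₀ hs
  exact ⟨d, rfl⟩

theorem IsTour.exists_counterTour_of_tourWeight_lt [NeZero N] (hR : R ≠ 0) (hN : 2 ≤ N)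
    {σ : Equiv.Perm (CounterPosition R N ⊕ CounterPosition R N)} (hσ : IsTour σ)
    (hlt : tourWeight (counterWeight R N) σ < prohibitiveCost R N) :
    ∃ d, tourEdges σ = tourEdges (counterTour R N d) := by
  have hcard := two_le_card_position (R := R) hN
  obtain ⟨μ, hμ, hedges⟩ := hσ.exists_alternatingPerm_of_tourWeight_lt hcard
    (f := layerwise R (Equiv.addRight 1)) (h := (3 : ℝ) ^ (R + 1)) (by positivity)
    (by simp [prohibitiveCost]) (fun _ _ => Nat.cast_nonneg _)
    (fun b t h => mod_cast le_counterCost h) hlt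
  have hcost : ∀ b, μ b = b ∧ b ≠ (0, 0) ∨ IsHop b (μ b) := fun b => by
    refine eq_self_or_isHop_of_counterCost_lt (fun h => ?_) ?_
    · refine hμ.apply_apply_ne (three_le_card_sum_self hcard) (Sum.inl b) ?_
      simp [← h]
    · have hmem : s(Sum.inl b, Sum.inr (μ b)) ∈ tourEdges σ :=
        hedges ▸ mk_inl_inr_mem_tourEdges_alternatingPerm.2 (.inl rfl)
      exact Nat.cast_lt.1 ((le_tourWeight (counterWeight_nonneg R N) hmem).trans_lt hlt)
  obtain ⟨d, rfl⟩ := exists_eq_stateShift_digitState hR hcost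
  exact ⟨d, hedges.symm⟩

theorem exists_improvingKSwap_counterTour [NeZero N] (hR : R ≠ 0) (hN : 3 ≤ N) {k : ℕ}
    (hk : 3 ≤ k) {d : ℕ → Fin 3} (hd : ¬ ∀ j < R, d j = 2) :
    ∃ τ, ImprovingKSwap (counterWeight R N) k (counterTour R N d) τ := by
  obtain ⟨j, hjR, hj, hnext⟩ := exists_last_digit_ne_two hd
  refine ⟨counterTour R N (carry d j), ⟨isTour_counterTour (by omega) _, ?_⟩, ?_⟩
  · refine (card_tourEdges_stateTour_sdiff_le _ ⟨j + 1, by omega⟩ fun i hi => ?_).trans hk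
    have hij : (i : ℕ) ≠ j + 1 := fun h => hi (Fin.ext h)
    have hvalue := prefixValue_carry (i := i) hj fun h => hnext (by omega)
    simp [digitState, hvalue, hij]
  · rw [tourWeight_counterTour hR hN, tourWeight_counterTour hR hN, Nat.cast_lt]
    exact Nat.add_lt_add_left (penalty_carry_lt hjR hj hnext) _

/-- The invariant of improving swap sequences: the tour encodes a digit sequence whose value is
at most `p`. -/
def EncodesValueLE (R N : ℕ) [NeZero N] (p : ℕ)
    (σ : Equiv.Perm (CounterPosition R N ⊕ CounterPosition R N)) : Prop :=
  ∃ d, tourEdges σ = tourEdges (counterTour R N d) ∧ prefixValue d R ≤ p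

theorem EncodesValueLE.of_improvingKSwap [NeZero N] (hR : R ≠ 0) {k p : ℕ}
    (hN : 2 ^ (k + 2) ≤ N)
    {σ τ : Equiv.Perm (CounterPosition R N ⊕ CounterPosition R N)}
    (hσ : EncodesValueLE R N p σ) (hswap : ImprovingKSwap (counterWeight R N) k σ τ) :
    EncodesValueLE R N (p + 2 ^ (k + 1)) τ := by
  obtain ⟨d, hσd, hdp⟩ := hσ
  obtain ⟨⟨hτ, hk⟩, hlt⟩ := (improvingKSwap_congr_left hσd _ _).1 hswap
  have hN₄ : 4 ≤ N := (Nat.pow_le_pow_right two_pos (Nat.le_add_left 2 k)).trans hN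
  obtain ⟨d', hτd'⟩ := hτ.exists_counterTour_of_tourWeight_lt hR (by omega)
    (hlt.trans (tourWeight_counterTour_lt hR (by omega) d))
  refine ⟨d', hτd', ?_⟩
  have hchanged : #{i | digitState R N d i ≠ digitState R N d' i} ≤ k := by
    rw [hτd'] at hk
    exact (card_filter_ne_le_card_tourEdges_sdiff hR
      (isTour_addRight_one (by omega)).apply_ne).trans hk
  exact (prefixValue_le_add_two_pow hN hchanged).trans (by omega)

theorem EncodesValueLE.two_pow_le_of_isLocalOpt [NeZero N] (hR : R ≠ 0) (hN : 3 ≤ N)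
    {k p : ℕ} (hk : 3 ≤ k) {σ : Equiv.Perm (CounterPosition R N ⊕ CounterPosition R N)}
    (hσ : EncodesValueLE R N p σ) (hopt : IsLocalOpt (counterWeight R N) k σ) : 2 ^ R ≤ p := by
  obtain ⟨d, hσd, hdp⟩ := hσ
  have hd : ∀ j < R, d j = 2 := by
    by_contra hd
    obtain ⟨τ, hτ⟩ := exists_improvingKSwap_counterTour hR hN hk hd
    exact hopt τ ((improvingKSwap_congr_left hσd _ _).2 hτ)
  have hvalue := prefixValue_add_two_of_forall_eq_two hd
  have : 2 ≤ 2 ^ R := Nat.le_self_pow hR 2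
  rw [pow_succ] at hvalue
  omega

theorem two_pow_le_length_mul_of_maximalImprovingSwapSeq [NeZero N] (hR : R ≠ 0)
    {k : ℕ} (hk : 3 ≤ k) (hN : 2 ^ (k + 2) ≤ N)
    {l : List (Equiv.Perm (CounterPosition R N ⊕ CounterPosition R N))}
    (hl : MaximalImprovingSwapSeq (counterWeight R N) k (counterTour R N 0) l) :
    2 ^ R ≤ l.length * 2 ^ (k + 1) := by
  have hN₄ : 4 ≤ N := (Nat.pow_le_pow_right two_pos (Nat.le_add_left 2 k)).trans hN
  simpa using le_add_length_mul_of_maximalImprovingSwapSeq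
    (P := EncodesValueLE R N) (p := 0) (fun _ _ _ hσ hswap => hσ.of_improvingKSwap hR hN hswap)
    (fun _ _ hσ hopt => hσ.two_pow_le_of_isLocalOpt hR (by omega) hk hopt)
    ⟨0, rfl, by simp [prefixValue_zero]⟩ hl

end CounterInstance

theorem tsp_kopt_all_exp_of_nine_le_general (k : ℕ) (hk : 3 ≤ k) : TSPKOptAllExp k := by
  have hN : 2 ≤ 2 ^ (k + 2) := Nat.le_self_pow (by omega) 2
  have : NeZero (2 ^ (k + 2)) := ⟨by positivity⟩
  refine TSPKOptAllExp.of_card_le_mul (D := 4 * 2 ^ (k + 2)) (q₀ := k + 2) fun q hq =>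
    ⟨CounterPosition (q + k + 1) (2 ^ (k + 2)) ⊕ CounterPosition (q + k + 1) (2 ^ (k + 2)),
      inferInstance, inferInstance, counterWeight _ _, counterTour _ _ 0, ?_, ?_,
      counterWeight_nonneg _ _, isTour_counterTour hN 0, fun l hl => ?_⟩
  · rw [Fintype.card_sum, card_position]
    nlinarith
  · rw [Fintype.card_sum, card_position]
    nlinarith
  · refine Nat.le_of_mul_le_mul_right ?_ (by positivity : 0 < 2 ^ (k + 1))
    rw [← pow_add]
    exact two_pow_le_length_mul_of_maximalImprovingSwapSeq (Nat.succ_ne_zero _) hk le_rfl hl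

/-- TSP/k-Opt has the all-exp property for every k ≥ 9. -/
theorem tsp_kopt_all_exp_of_nine_le (k : ℕ) (hk : 9 ≤ k) : TSPKOptAllExp k :=
  tsp_kopt_all_exp_of_nine_le_general k (by omega)
end

section
/- There exists a (4,2)-simple gadget; that is, a parity gadget satisfying the (4,2) swap-count conditions whose only possible subtours, in any graph into which it is embedded via one external edge at each of X, X', Y, Y', Z, Z', are the four subtours (1)–(4), independent of the rest of the graph. -/
open SimpleGraph

/-- The number of edges of the edge set `F` incident to the vertex `v`
(the degree of `v` in the graph with edge set `F`). -/
noncomputable def edgeDeg {V : Type*} (F : Set (Sym2 V)) (v : V) : ℕ :=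
  {u | s(v, u) ∈ F}.ncard

/-- `v` is an endpoint of a path of the path system `F` (degree at most one). -/
def IsEndpoint {V : Type*} (F : Set (Sym2 V)) (v : V) : Prop :=
  edgeDeg F v ≤ 1

/-- The path cover `F` contains an `{a, b}`-path: `a` and `b` are endpoints of one and
the same path of `F`. -/
def HasPath {V : Type*} (F : Set (Sym2 V)) (a b : V) : Prop :=
  IsEndpoint F a ∧ IsEndpoint F b ∧ (SimpleGraph.fromEdgeSet F).Reachable a b

/-- The data of a (candidate) parity gadget: a graph with six distinguished vertices
`X, X', Y, Y', Z, Z'` and a distinguished partition of (some of) its edges into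
same-set edges and different-set edges (all remaining edges having weight zero). -/
structure GadgetData (V : Type*) where
  G : SimpleGraph V
  X : V
  X' : V
  Y : V
  Y' : V
  Z : V
  Z' : V
  sameSet : Set (Sym2 V)
  diffSet : Set (Sym2 V)

namespace GadgetData

variable {V : Type*} (g : GadgetData V)

/-- The six distinguished vertices. -/
def terminals : Set V := {g.X, g.X', g.Y, g.Y', g.Z, g.Z'}

/-- `F` is a cover of the vertices of the gadget by vertex-disjoint paths whose
endpoints lie in the set of distinguished vertices: an acyclic set of gadget edges of
maximum degree two in which every vertex of degree less than two is distinguished. -/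
def IsPathCover (F : Set (Sym2 V)) : Prop :=
  F ⊆ g.G.edgeSet ∧ (SimpleGraph.fromEdgeSet F).IsAcyclic ∧
    (∀ v, edgeDeg F v ≤ 2) ∧ (∀ v, edgeDeg F v ≤ 1 → v ∈ g.terminals)

/-- A subtour of the gadget: a path cover in which `Z` and `Z'` are path endpoints. -/
def Subtour (F : Set (Sym2 V)) : Prop :=
  g.IsPathCover F ∧ IsEndpoint F g.Z ∧ IsEndpoint F g.Z'

/-- Subtour (1): a single `{Z, Z'}`-path (the remaining distinguished vertices are
interior). -/
def Sub1 (F : Set (Sym2 V)) : Prop :=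
  g.Subtour F ∧ HasPath F g.Z g.Z' ∧
    edgeDeg F g.X = 2 ∧ edgeDeg F g.X' = 2 ∧ edgeDeg F g.Y = 2 ∧ edgeDeg F g.Y' = 2

/-- Subtour (2): an `{X, X'}`-path and a `{Z, Z'}`-path. -/
def Sub2 (F : Set (Sym2 V)) : Prop :=
  g.Subtour F ∧ HasPath F g.Z g.Z' ∧ HasPath F g.X g.X' ∧
    edgeDeg F g.Y = 2 ∧ edgeDeg F g.Y' = 2

/-- Subtour (3): a `{Y, Y'}`-path and a `{Z, Z'}`-path. -/
def Sub3 (F : Set (Sym2 V)) : Prop :=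
  g.Subtour F ∧ HasPath F g.Z g.Z' ∧ HasPath F g.Y g.Y' ∧
    edgeDeg F g.X = 2 ∧ edgeDeg F g.X' = 2

/-- Subtour (4): an `{X, X'}`-path, a `{Y, Y'}`-path and a `{Z, Z'}`-path. -/
def Sub4 (F : Set (Sym2 V)) : Prop :=
  g.Subtour F ∧ HasPath F g.Z g.Z' ∧ HasPath F g.X g.X' ∧ HasPath F g.Y g.Y'

/-- `g` is a parity gadget. -/
structure IsParityGadget : Prop where
  nodup : List.Nodup [g.X, g.X', g.Y, g.Y', g.Z, g.Z']
  same_sub : g.sameSet ⊆ g.G.edgeSet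
  diff_sub : g.diffSet ⊆ g.G.edgeSet
  disj : Disjoint g.sameSet g.diffSet
  ex1 : ∃! F, g.Sub1 F
  ex2 : ∃! F, g.Sub2 F
  ex3 : ∃! F, g.Sub3 F
  ex4 : ∃! F, g.Sub4 F
  xpair : ∀ F, g.Subtour F → IsEndpoint F g.X → IsEndpoint F g.X' →
    HasPath F g.X g.X'
  ypair : ∀ F, g.Subtour F → IsEndpoint F g.Y → IsEndpoint F g.Y' →
    HasPath F g.Y g.Y'
  w1 : ∀ F, g.Sub1 F → (F ∩ g.sameSet).ncard = 1 ∧ F ∩ g.diffSet = ∅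
  w4 : ∀ F, g.Sub4 F → (F ∩ g.sameSet).ncard = 1 ∧ F ∩ g.diffSet = ∅
  w2 : ∀ F, g.Sub2 F → (F ∩ g.diffSet).ncard = 1 ∧ F ∩ g.sameSet = ∅
  w3 : ∀ F, g.Sub3 F → (F ∩ g.diffSet).ncard = 1 ∧ F ∩ g.sameSet = ∅

/-- The `(r_x, r_y)` swap-count conditions of an `(r_x, r_y)`-parity gadget. -/
def SwapCounts (rx ry : ℕ) : Prop :=
  (∀ F F', g.Sub1 F → g.Sub2 F' → (F \ F').ncard = rx ∧ (F' \ F).ncard = rx - 1) ∧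
  (∀ F F', g.Sub3 F → g.Sub4 F' → (F \ F').ncard = rx ∧ (F' \ F).ncard = rx - 1) ∧
  (∀ F F', g.Sub1 F → g.Sub3 F' → (F \ F').ncard = ry ∧ (F' \ F).ncard = ry - 1) ∧
  (∀ F F', g.Sub2 F → g.Sub4 F' → (F \ F').ncard = ry ∧ (F' \ F).ncard = ry - 1) ∧
  (∀ F F', g.Sub1 F → g.Sub4 F' →
    max rx ry ≤ (F \ F').ncard ∧ max rx ry - 1 ≤ (F' \ F).ncard) ∧
  (∀ F F', g.Sub2 F → g.Sub3 F' →
    max rx ry ≤ (F \ F').ncard ∧ max rx ry - 1 ≤ (F' \ F).ncard)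

/-- `g` is a simple gadget: independent of the surrounding graph, its only possible
subtours are the four subtours (1)–(4). -/
def IsSimple : Prop :=
  ∀ F, g.Subtour F → g.Sub1 F ∨ g.Sub2 F ∨ g.Sub3 F ∨ g.Sub4 F

end GadgetData

/-!
Six non-terminals of the gadget have degree two, which forces six two-edge paths into every
subtour. Each remaining non-terminal lies on one of these paths, so a subtour uses exactly one
further edge there. If it uses `s(0, 1)` it cannot use `s(5, 6)`, and if it uses `s(1, 2)` it cannot
use `s(6, 7)`, because the forced paths would close a 6-cycle; this leaves two ways to run through
`0, 1, 2` and `4, 5, 6, 7`, and they decide whether an `{X, X'}`-path splits off. For either way,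
one free choice remains, which decides whether a `{Y, Y'}`-path splits off. The four resulting edge
sets are path covers, and a subtour containing one of them equals it: every edge has a non-terminal
end, where all path covers have degree two.
-/

section EdgeSets

variable {V : Type*} {F F' : Set (Sym2 V)} {u v : V} {e : Sym2 V}

theorem edgeDeg_coe_finset [Fintype V] [DecidableEq V] (S : Finset (Sym2 V)) (v : V) :
    edgeDeg (S : Set (Sym2 V)) v = Finset.card {u | s(v, u) ∈ S} := by
  rw [edgeDeg, ← Set.ncard_coe_finset]
  simp

theorem mem_of_edgeDeg_le [Finite V] (hF : F ⊆ F') (hdeg : edgeDeg F' v ≤ edgeDeg F v)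
    (he : e ∈ F') (hv : v ∈ e) : e ∈ F := by
  obtain ⟨u, rfl⟩ := hv
  have heq : {u | s(v, u) ∈ F} = {u | s(v, u) ∈ F'} :=
    Set.eq_of_subset_of_ncard_le (fun _ hu => hF hu) hdeg
  exact heq.ge he

theorem existsUnique_mem_ne_of_edgeDeg_eq_two (hdeg : edgeDeg F v = 2) (he : e ∈ F) (hv : v ∈ e) :
    ∃! d, d ∈ F ∧ v ∈ d ∧ d ≠ e := by
  obtain ⟨w, rfl⟩ := hv
  have hcard : ({u | s(v, u) ∈ F} \ {w}).ncard = 1 := by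
    rw [Set.ncard_sdiff_singleton_of_mem (by exact he)]
    exact congrArg (· - 1) hdeg
  obtain ⟨a, ha⟩ := Set.ncard_eq_one.mp hcard
  have mem_iff (u : V) : s(v, u) ∈ F ∧ u ≠ w ↔ u = a := Set.ext_iff.mp ha u
  have haF := (mem_iff a).mpr rfl
  refine ⟨s(v, a), ⟨haF.1, Sym2.mem_mk_left v a, mt Sym2.congr_right.mp haF.2⟩, ?_⟩
  rintro _ ⟨hdF, ⟨u, rfl⟩, hne⟩
  rw [(mem_iff u).mp ⟨hdF, fun huw => hne (huw ▸ rfl)⟩]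

theorem reachable_of_isChain {G : SimpleGraph V} {l : List V} (hne : l ≠ []) (hl : l.IsChain G.Adj)
    (hu : l.head hne = u) (hv : l.getLast hne = v) : G.Reachable u v :=
  hu ▸ hv ▸ (Walk.ofSupport l hne hl).reachable

theorem isAcyclic_hasse (α : Type*) [LinearOrder α] : (hasse α).IsAcyclic := by
  have not_reachable {a b : α} (hab : a ⋖ b) :
      ¬((hasse α).deleteEdges {s(a, b)}).Reachable a b := by
    rintro ⟨p⟩
    obtain ⟨⟨⟨c, d⟩, hcd⟩, -, hc : c ≤ a, hd : ¬d ≤ a⟩ :=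
      p.exists_boundary_dart (Set.Iic a) Set.self_mem_Iic (Set.notMem_Iic.mpr hab.lt)
    obtain ⟨hadj, hne⟩ := deleteEdges_adj.mp hcd
    have hcovBy : c ⋖ d := hadj.resolve_right fun h => hd (h.le.trans hc)
    obtain rfl : c = a := hc.eq_of_not_lt fun h => hcovBy.2 h (not_le.mp hd)
    exact hne (congrArg _ (hcovBy.unique_right hab))
  refine isAcyclic_iff_forall_adj_isBridge.mpr fun a b hab => ?_
  rcases hab with hab | hba
  · exact isBridge_iff.mpr (not_reachable hab)
  · rw [Sym2.eq_swap]
    exact isBridge_iff.mpr (not_reachable hba)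

theorem isAcyclic_fromEdgeSet_of_idxOf [DecidableEq V] (l : List V) (hl : ∀ v, v ∈ l)
    (hF : ∀ u v, s(u, v) ∈ F → l.idxOf u + 1 = l.idxOf v ∨ l.idxOf v + 1 = l.idxOf u) :
    (fromEdgeSet F).IsAcyclic :=
  (isAcyclic_hasse ℕ).comap
    ⟨l.idxOf, fun {u v} huv => by
      simpa only [hasse_adj, Nat.covBy_iff_add_one_eq] using
        hF u v ((fromEdgeSet_adj F).mp huv).1⟩
    fun u _ huv => (List.idxOf_inj (hl u)).mp huv

theorem not_subset_of_cycleGraph_isContained {n : ℕ} (hF : (fromEdgeSet F).IsAcyclic)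
    (hn : 3 ≤ n) (hF' : cycleGraph n ⊑ fromEdgeSet F') : ¬F' ⊆ F := fun hsub =>
  isAcyclic_iff_free_cycleGraph.mp (hF.anti (fromEdgeSet_mono hsub)) n hn hF'

end EdgeSets

namespace GadgetData

variable {V : Type*} {g : GadgetData V} {F F' : Set (Sym2 V)} {v : V}

theorem IsPathCover.edgeDeg_eq_two (hF : g.IsPathCover F) (hv : v ∉ g.terminals) :
    edgeDeg F v = 2 := by
  have hle := hF.2.2.1 v
  have hlt := mt (hF.2.2.2 v) hv
  omega

theorem IsPathCover.eq_of_subset [Finite V] (hF : g.IsPathCover F) (hF' : g.IsPathCover F')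
    (hg : ∀ e ∈ g.G.edgeSet, ∃ v ∈ e, v ∉ g.terminals) (h : F ⊆ F') : F = F' := by
  refine h.antisymm fun e he => ?_
  obtain ⟨v, hve, hv⟩ := hg e (hF'.1 he)
  exact mem_of_edgeDeg_le h (by rw [hF.edgeDeg_eq_two hv, hF'.edgeDeg_eq_two hv]) he hve

/-- The subtours of `g` are exactly the sets `T x y`, where `x` and `y` record whether an
`{X, X'}`-path and a `{Y, Y'}`-path are split off from the `{Z, Z'}`-path. -/
structure IsSubtourFamily (g : GadgetData V) (T : Bool → Bool → Set (Sym2 V)) : Prop where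
  subtour_iff : ∀ F, g.Subtour F ↔ ∃ x y, F = T x y
  hasPath_Z : ∀ x y, HasPath (T x y) g.Z g.Z'
  hasPath_X : ∀ y, HasPath (T true y) g.X g.X'
  hasPath_Y : ∀ x, HasPath (T x true) g.Y g.Y'
  edgeDeg_X : ∀ y, edgeDeg (T false y) g.X = 2 ∧ edgeDeg (T false y) g.X' = 2
  edgeDeg_Y : ∀ x, edgeDeg (T x false) g.Y = 2 ∧ edgeDeg (T x false) g.Y' = 2

section IsSubtourFamily

variable {T : Bool → Bool → Set (Sym2 V)}

theorem IsSubtourFamily.subtour (hT : g.IsSubtourFamily T) (x y : Bool) : g.Subtour (T x y) :=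
  (hT.subtour_iff _).mpr ⟨x, y, rfl⟩

theorem IsSubtourFamily.isEndpoint_X_iff (hT : g.IsSubtourFamily T) (x y : Bool) :
    IsEndpoint (T x y) g.X ↔ x = true := by
  cases x
  · simp [IsEndpoint, hT.edgeDeg_X y]
  · simp [(hT.hasPath_X y).1]

theorem IsSubtourFamily.isEndpoint_Y_iff (hT : g.IsSubtourFamily T) (x y : Bool) :
    IsEndpoint (T x y) g.Y ↔ y = true := by
  cases y
  · simp [IsEndpoint, hT.edgeDeg_Y x]
  · simp [(hT.hasPath_Y x).1]

theorem IsSubtourFamily.eq_of_isEndpoint_iff (hT : g.IsSubtourFamily T) (hF : g.Subtour F)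
    {x y : Bool} (hX : IsEndpoint F g.X ↔ x = true) (hY : IsEndpoint F g.Y ↔ y = true) :
    F = T x y := by
  obtain ⟨x', y', rfl⟩ := (hT.subtour_iff F).mp hF
  rw [hT.isEndpoint_X_iff] at hX
  rw [hT.isEndpoint_Y_iff] at hY
  rw [Bool.eq_iff_iff.mpr hX, Bool.eq_iff_iff.mpr hY]

theorem IsSubtourFamily.sub1_iff (hT : g.IsSubtourFamily T) : g.Sub1 F ↔ F = T false false := by
  constructor
  · rintro ⟨hF, -, hX, -, hY, -⟩
    exact hT.eq_of_isEndpoint_iff hF (by simp [IsEndpoint, hX]) (by simp [IsEndpoint, hY])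
  · rintro rfl
    exact ⟨hT.subtour _ _, hT.hasPath_Z _ _, (hT.edgeDeg_X _).1, (hT.edgeDeg_X _).2,
      hT.edgeDeg_Y _⟩

theorem IsSubtourFamily.sub2_iff (hT : g.IsSubtourFamily T) : g.Sub2 F ↔ F = T true false := by
  constructor
  · rintro ⟨hF, -, hX, hY, -⟩
    exact hT.eq_of_isEndpoint_iff hF (by simp [hX.1]) (by simp [IsEndpoint, hY])
  · rintro rfl
    exact ⟨hT.subtour _ _, hT.hasPath_Z _ _, hT.hasPath_X _, hT.edgeDeg_Y _⟩

theorem IsSubtourFamily.sub3_iff (hT : g.IsSubtourFamily T) : g.Sub3 F ↔ F = T false true := by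
  constructor
  · rintro ⟨hF, -, hY, hX, -⟩
    exact hT.eq_of_isEndpoint_iff hF (by simp [IsEndpoint, hX]) (by simp [hY.1])
  · rintro rfl
    exact ⟨hT.subtour _ _, hT.hasPath_Z _ _, hT.hasPath_Y _, hT.edgeDeg_X _⟩

theorem IsSubtourFamily.sub4_iff (hT : g.IsSubtourFamily T) : g.Sub4 F ↔ F = T true true := by
  constructor
  · rintro ⟨hF, -, hX, hY⟩
    exact hT.eq_of_isEndpoint_iff hF (by simp [hX.1]) (by simp [hY.1])
  · rintro rfl
    exact ⟨hT.subtour _ _, hT.hasPath_Z _ _, hT.hasPath_X _, hT.hasPath_Y _⟩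

theorem IsSubtourFamily.isSimple (hT : g.IsSubtourFamily T) : g.IsSimple := by
  intro F hF
  rw [hT.sub1_iff, hT.sub2_iff, hT.sub3_iff, hT.sub4_iff]
  obtain ⟨x, y, rfl⟩ := (hT.subtour_iff F).mp hF
  cases x <;> cases y <;> simp

theorem IsSubtourFamily.isParityGadget (hT : g.IsSubtourFamily T)
    (nodup : [g.X, g.X', g.Y, g.Y', g.Z, g.Z'].Nodup)
    (same_sub : g.sameSet ⊆ g.G.edgeSet) (diff_sub : g.diffSet ⊆ g.G.edgeSet)
    (disj : Disjoint g.sameSet g.diffSet)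
    (w_same : ∀ x, (T x x ∩ g.sameSet).ncard = 1 ∧ T x x ∩ g.diffSet = ∅)
    (w_diff : ∀ x, (T x (!x) ∩ g.diffSet).ncard = 1 ∧ T x (!x) ∩ g.sameSet = ∅) :
    g.IsParityGadget where
  nodup := nodup
  same_sub := same_sub
  diff_sub := diff_sub
  disj := disj
  ex1 := by simp only [hT.sub1_iff, existsUnique_eq]
  ex2 := by simp only [hT.sub2_iff, existsUnique_eq]
  ex3 := by simp only [hT.sub3_iff, existsUnique_eq]
  ex4 := by simp only [hT.sub4_iff, existsUnique_eq]
  xpair F hF hX _ := by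
    obtain ⟨x, y, rfl⟩ := (hT.subtour_iff F).mp hF
    obtain rfl := (hT.isEndpoint_X_iff x y).mp hX
    exact hT.hasPath_X y
  ypair F hF hY _ := by
    obtain ⟨x, y, rfl⟩ := (hT.subtour_iff F).mp hF
    obtain rfl := (hT.isEndpoint_Y_iff x y).mp hY
    exact hT.hasPath_Y x
  w1 _ h := hT.sub1_iff.mp h ▸ w_same false
  w4 _ h := hT.sub4_iff.mp h ▸ w_same true
  w2 _ h := hT.sub2_iff.mp h ▸ w_diff true
  w3 _ h := hT.sub3_iff.mp h ▸ w_diff false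

end IsSubtourFamily

end GadgetData

namespace FourTwoGadget

/-- Six two-edge paths through the vertices `12, …, 17`, which have degree two in the gadget and
are not terminals, so that every subtour contains these paths. -/
def forcedEdges : Finset (Sym2 (Fin 18)) :=
  {s(0, 12), s(12, 5), s(1, 13), s(13, 6), s(2, 14), s(14, 7), s(3, 15), s(15, 8),
    s(4, 16), s(16, 10), s(9, 17), s(17, 11)}

/-- The edges of the path `0, 1, …, 7` other than `s(2, 3)` and `s(3, 4)` that a subtour uses,
depending on whether it contains an `{X, X'}`-path. -/
def railEdges (x : Bool) : Finset (Sym2 (Fin 18)) :=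
  if x then {s(1, 2), s(5, 6)} else {s(0, 1), s(4, 5), s(6, 7)}

/-- The edge at `Y'` that a subtour uses unless it contains a `{Y, Y'}`-path. -/
def spurEdges (y : Bool) : Finset (Sym2 (Fin 18)) :=
  if y then ∅ else {s(8, 9)}

/-- The weighted edge of the subtour with parameters `x` and `y`. -/
def linkEdge : Bool → Bool → Sym2 (Fin 18)
  | false, false => s(2, 3)
  | true, false => s(3, 4)
  | false, true => s(2, 9)
  | true, true => s(4, 9)

/-- The subtour that contains an `{X, X'}`-path if and only if `x` holds and a `{Y, Y'}`-path if
and only if `y` holds. -/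
def subtour (x y : Bool) : Finset (Sym2 (Fin 18)) :=
  forcedEdges ∪ railEdges x ∪ spurEdges y ∪ {linkEdge x y}

/-- All edges of the gadget: the path `0, 1, …, 7`, the star with centre `9` and leaves `2`, `4`
and `8`, and the forced edges. -/
def edges : Finset (Sym2 (Fin 18)) :=
  forcedEdges ∪ {s(0, 1), s(1, 2), s(2, 3), s(3, 4), s(4, 5), s(5, 6), s(6, 7)} ∪
    {s(2, 9), s(4, 9), s(8, 9)}

/-- The same-set edges. -/
def sameEdges : Finset (Sym2 (Fin 18)) := {linkEdge false false, linkEdge true true}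

/-- The different-set edges. -/
def diffEdges : Finset (Sym2 (Fin 18)) := {linkEdge true false, linkEdge false true}

/-- The (4,2)-simple gadget. -/
def gadget : GadgetData (Fin 18) where
  G := fromEdgeSet (edges : Set (Sym2 (Fin 18)))
  X := 0
  X' := 7
  Y := 3
  Y' := 8
  Z := 10
  Z' := 11
  sameSet := sameEdges
  diffSet := diffEdges

/-- The `{Z, Z'}`-path of `subtour x y`, as the list of its vertices. -/
def pathZ : Bool → Bool → List (Fin 18)
  | false, false => [10, 16, 4, 5, 12, 0, 1, 13, 6, 7, 14, 2, 3, 15, 8, 9, 17, 11]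
  | true, false => [10, 16, 4, 3, 15, 8, 9, 17, 11]
  | false, true => [10, 16, 4, 5, 12, 0, 1, 13, 6, 7, 14, 2, 9, 17, 11]
  | true, true => [10, 16, 4, 9, 17, 11]

/-- The `{X, X'}`-path of `subtour true y`, as the list of its vertices. -/
def pathX : List (Fin 18) := [0, 12, 5, 6, 13, 1, 2, 14, 7]

/-- The `{Y, Y'}`-path of `subtour x true`, as the list of its vertices. -/
def pathY : List (Fin 18) := [3, 15, 8]

theorem mem_terminals_iff (v : Fin 18) :
    v ∈ gadget.terminals ↔ v ∈ ({0, 7, 3, 8, 10, 11} : Finset (Fin 18)) := by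
  simp [GadgetData.terminals, gadget]

theorem edgeSet_gadget : gadget.G.edgeSet = edges := by
  have not_isDiag : ∀ e ∈ edges, ¬e.IsDiag := by decide +kernel
  simpa [gadget, Set.disjoint_left] using not_isDiag

theorem exists_notMem_terminals_of_mem_edgeSet :
    ∀ e ∈ gadget.G.edgeSet, ∃ v ∈ e, v ∉ gadget.terminals := by
  simp only [edgeSet_gadget, Finset.mem_coe, mem_terminals_iff]
  decide +kernel

theorem edgeDeg_subtour (x y : Bool) (v : Fin 18) :
    edgeDeg (subtour x y : Set (Sym2 (Fin 18))) v =
      if v = 10 ∨ v = 11 ∨ x ∧ (v = 0 ∨ v = 7) ∨ y ∧ (v = 3 ∨ v = 8) then 1 else 2 := by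
  rw [edgeDeg_coe_finset]
  revert x y v
  decide +kernel

theorem isEndpoint_subtour_iff {x y : Bool} {v : Fin 18} :
    IsEndpoint (subtour x y : Set (Sym2 (Fin 18))) v ↔
      v = 10 ∨ v = 11 ∨ x ∧ (v = 0 ∨ v = 7) ∨ y ∧ (v = 3 ∨ v = 8) := by
  rw [IsEndpoint, edgeDeg_subtour]
  split_ifs with h <;> simp [h]

theorem isAcyclic_subtour (x y : Bool) :
    (fromEdgeSet (subtour x y : Set (Sym2 (Fin 18)))).IsAcyclic := by
  refine isAcyclic_fromEdgeSet_of_idxOf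
    (pathZ x y ++ (if x then pathX else []) ++ (if y then pathY else [])) ?_ ?_
  · revert x y
    decide +kernel
  · simp only [Finset.mem_coe]
    revert x y
    decide +kernel

theorem isPathCover_subtour (x y : Bool) : gadget.IsPathCover (subtour x y) := by
  refine ⟨?_, isAcyclic_subtour x y, fun v => ?_, fun v hv => ?_⟩
  · rw [edgeSet_gadget, Finset.coe_subset]
    revert x y
    decide +kernel
  · rw [edgeDeg_subtour]
    split_ifs <;> simp
  · rw [← IsEndpoint, isEndpoint_subtour_iff] at hv
    rw [mem_terminals_iff]
    revert x y v
    decide +kernel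

theorem hasPath_Z (x y : Bool) : HasPath (subtour x y) gadget.Z gadget.Z' := by
  refine ⟨isEndpoint_subtour_iff.mpr ?_, isEndpoint_subtour_iff.mpr ?_,
    reachable_of_isChain (l := pathZ x y) ?_ ?_ ?_ ?_⟩ <;>
  · revert x y
    decide +kernel

theorem hasPath_X (y : Bool) : HasPath (subtour true y) gadget.X gadget.X' := by
  refine ⟨isEndpoint_subtour_iff.mpr ?_, isEndpoint_subtour_iff.mpr ?_,
    reachable_of_isChain (l := pathX) ?_ ?_ ?_ ?_⟩ <;>
  · revert y
    decide +kernel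

theorem hasPath_Y (x : Bool) : HasPath (subtour x true) gadget.Y gadget.Y' := by
  refine ⟨isEndpoint_subtour_iff.mpr ?_, isEndpoint_subtour_iff.mpr ?_,
    reachable_of_isChain (l := pathY) ?_ ?_ ?_ ?_⟩ <;>
  · revert x
    decide +kernel

section Classification

/-- The non-terminals that lie on exactly one forced edge. -/
def junctions : Finset (Fin 18) := {1, 2, 4, 5, 6, 9}

/-- The edges at `v` that are not forced; a subtour uses exactly one of them if `v` is a
junction. -/
def switchEdges (v : Fin 18) : Finset (Sym2 (Fin 18)) := {e ∈ edges \ forcedEdges | v ∈ e}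

variable {F : Set (Sym2 (Fin 18))} {v : Fin 18} {d e : Sym2 (Fin 18)}

theorem forcedEdges_subset (hF : gadget.IsPathCover F) : ↑forcedEdges ⊆ F := by
  intro e he
  have exists_degree_two : ∀ e ∈ forcedEdges, ∃ v ∈ e, e ∈ edges ∧
      v ∉ ({0, 7, 3, 8, 10, 11} : Finset (Fin 18)) ∧ Finset.card {u | s(v, u) ∈ edges} = 2 := by
    decide +kernel
  obtain ⟨v, hve, he, hv, hdeg⟩ := exists_degree_two e he
  refine mem_of_edgeDeg_le (edgeSet_gadget ▸ hF.1) ?_ he hve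
  rw [edgeDeg_coe_finset, hdeg, hF.edgeDeg_eq_two ((mem_terminals_iff v).not.mpr hv)]

theorem existsUnique_mem_switchEdges (hF : gadget.IsPathCover F) (hv : v ∈ junctions) :
    ∃! e, e ∈ F ∧ e ∈ switchEdges v := by
  have exists_forced : ∀ v ∈ junctions, v ∉ ({0, 7, 3, 8, 10, 11} : Finset (Fin 18)) ∧
      ∃ c ∈ forcedEdges, v ∈ c ∧ ∀ e ∈ edges, e ∈ switchEdges v ↔ v ∈ e ∧ e ≠ c := by
    decide +kernel
  obtain ⟨hterm, c, hc, hvc, mem_switchEdges_iff⟩ := exists_forced v hv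
  have hdeg : edgeDeg F v = 2 := hF.edgeDeg_eq_two ((mem_terminals_iff v).not.mpr hterm)
  refine (existsUnique_congr fun e => and_congr_right fun he => ?_).mpr
    (existsUnique_mem_ne_of_edgeDeg_eq_two hdeg (forcedEdges_subset hF hc) hvc)
  exact mem_switchEdges_iff e (edgeSet_gadget.le (hF.1 he))

theorem exists_mem_of_switchEdges_eq {T : Finset (Sym2 (Fin 18))} (hF : gadget.IsPathCover F)
    (hv : v ∈ junctions) (hT : switchEdges v = T) : ∃ e ∈ T, e ∈ F := by
  obtain ⟨e, he, hev⟩ := (existsUnique_mem_switchEdges hF hv).exists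
  exact ⟨e, hT ▸ hev, he⟩

theorem notMem_of_mem_switchEdges (hF : gadget.IsPathCover F) (hd : d ∈ F)
    (h : ∃ v ∈ junctions, d ∈ switchEdges v ∧ e ∈ switchEdges v ∧ d ≠ e) : e ∉ F := by
  obtain ⟨v, hv, hdv, hev, hne⟩ := h
  exact fun he => hne ((existsUnique_mem_switchEdges hF hv).unique ⟨hd, hdv⟩ ⟨he, hev⟩)

theorem not_mem_zero_one_and_five_six (hF : gadget.IsPathCover F) :
    ¬(s(0, 1) ∈ F ∧ s(5, 6) ∈ F) := by
  let cycleEdges : Finset (Sym2 (Fin 18)) := {s(0, 1), s(5, 6)} ∪ forcedEdges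
  have hcycle : cycleGraph 6 ⊑ fromEdgeSet (cycleEdges : Set (Sym2 (Fin 18))) :=
    ⟨⟨⟨![0, 12, 5, 6, 13, 1], by decide +kernel⟩, by decide⟩⟩
  simpa [cycleEdges, Set.insert_subset_iff, forcedEdges_subset hF] using
    not_subset_of_cycleGraph_isContained hF.2.1 (by norm_num) hcycle

theorem not_mem_one_two_and_six_seven (hF : gadget.IsPathCover F) :
    ¬(s(1, 2) ∈ F ∧ s(6, 7) ∈ F) := by
  let cycleEdges : Finset (Sym2 (Fin 18)) := {s(1, 2), s(6, 7)} ∪ forcedEdges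
  have hcycle : cycleGraph 6 ⊑ fromEdgeSet (cycleEdges : Set (Sym2 (Fin 18))) :=
    ⟨⟨⟨![1, 13, 6, 7, 14, 2], by decide +kernel⟩, by decide⟩⟩
  simpa [cycleEdges, Set.insert_subset_iff, forcedEdges_subset hF] using
    not_subset_of_cycleGraph_isContained hF.2.1 (by norm_num) hcycle

theorem exists_railEdges_subset (hF : gadget.IsPathCover F) : ∃ x, ↑(railEdges x) ⊆ F := by
  have at_one : s(0, 1) ∈ F ∨ s(1, 2) ∈ F := by
    simpa using exists_mem_of_switchEdges_eq hF (v := 1) (T := {s(0, 1), s(1, 2)})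
      (by decide) (by decide +kernel)
  have at_five : s(4, 5) ∈ F ∨ s(5, 6) ∈ F := by
    simpa using exists_mem_of_switchEdges_eq hF (v := 5) (T := {s(4, 5), s(5, 6)})
      (by decide) (by decide +kernel)
  have at_six : s(5, 6) ∈ F ∨ s(6, 7) ∈ F := by
    simpa using exists_mem_of_switchEdges_eq hF (v := 6) (T := {s(5, 6), s(6, 7)})
      (by decide) (by decide +kernel)
  rcases at_one with h01 | h12
  · have h56 : s(5, 6) ∉ F := fun h56 => not_mem_zero_one_and_five_six hF ⟨h01, h56⟩
    refine ⟨false, ?_⟩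
    simp [railEdges, Set.insert_subset_iff, h01, at_five.resolve_right h56,
      at_six.resolve_left h56]
  · have h67 : s(6, 7) ∉ F := fun h67 => not_mem_one_two_and_six_seven hF ⟨h12, h67⟩
    refine ⟨true, ?_⟩
    simp [railEdges, Set.insert_subset_iff, h12, at_six.resolve_right h67]

theorem exists_spurEdges_linkEdge_subset (hF : gadget.IsPathCover F) {x : Bool}
    (hx : ↑(railEdges x) ⊆ F) : ∃ y, ↑(spurEdges y) ⊆ F ∧ linkEdge x y ∈ F := by
  have at_two : s(1, 2) ∈ F ∨ s(2, 3) ∈ F ∨ s(2, 9) ∈ F := by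
    simpa using exists_mem_of_switchEdges_eq hF (v := 2) (T := {s(1, 2), s(2, 3), s(2, 9)})
      (by decide) (by decide +kernel)
  have at_four : s(3, 4) ∈ F ∨ s(4, 5) ∈ F ∨ s(4, 9) ∈ F := by
    simpa using exists_mem_of_switchEdges_eq hF (v := 4) (T := {s(3, 4), s(4, 5), s(4, 9)})
      (by decide) (by decide +kernel)
  have at_nine : s(2, 9) ∈ F ∨ s(4, 9) ∈ F ∨ s(8, 9) ∈ F := by
    simpa using exists_mem_of_switchEdges_eq hF (v := 9) (T := {s(2, 9), s(4, 9), s(8, 9)})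
      (by decide) (by decide +kernel)
  cases x
  · have h01 : s(0, 1) ∈ F := hx (by decide +kernel)
    have h45 : s(4, 5) ∈ F := hx (by decide +kernel)
    have h12 : s(1, 2) ∉ F := notMem_of_mem_switchEdges hF h01 (by decide +kernel)
    have h49 : s(4, 9) ∉ F := notMem_of_mem_switchEdges hF h45 (by decide +kernel)
    rcases at_two.resolve_left h12 with h23 | h29
    · have h29 : s(2, 9) ∉ F := notMem_of_mem_switchEdges hF h23 (by decide +kernel)
      have h89 : s(8, 9) ∈ F := (at_nine.resolve_left h29).resolve_left h49
      exact ⟨false, by simpa [spurEdges] using h89, h23⟩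
    · exact ⟨true, by simp [spurEdges], h29⟩
  · have h12 : s(1, 2) ∈ F := hx (by decide +kernel)
    have h56 : s(5, 6) ∈ F := hx (by decide +kernel)
    have h29 : s(2, 9) ∉ F := notMem_of_mem_switchEdges hF h12 (by decide +kernel)
    have h45 : s(4, 5) ∉ F := notMem_of_mem_switchEdges hF h56 (by decide +kernel)
    rcases at_four with h34 | h45' | h49
    · have h49 : s(4, 9) ∉ F := notMem_of_mem_switchEdges hF h34 (by decide +kernel)
      have h89 : s(8, 9) ∈ F := (at_nine.resolve_left h29).resolve_left h49
      exact ⟨false, by simpa [spurEdges] using h89, h34⟩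
    · exact absurd h45' h45
    · exact ⟨true, by simp [spurEdges], h49⟩

theorem exists_eq_subtour (hF : gadget.IsPathCover F) : ∃ x y, F = subtour x y := by
  obtain ⟨x, hx⟩ := exists_railEdges_subset hF
  obtain ⟨y, hy, hxy⟩ := exists_spurEdges_linkEdge_subset hF hx
  have hsub : ↑(subtour x y) ⊆ F := by
    simpa [subtour, Set.insert_subset_iff, forcedEdges_subset hF, hx, hy] using hxy
  exact ⟨x, y, ((isPathCover_subtour x y).eq_of_subset hF
    exists_notMem_terminals_of_mem_edgeSet hsub).symm⟩

end Classification

theorem isSubtourFamily : gadget.IsSubtourFamily fun x y => subtour x y where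
  subtour_iff F := by
    refine ⟨fun hF => exists_eq_subtour hF.1, ?_⟩
    rintro ⟨x, y, rfl⟩
    exact ⟨isPathCover_subtour x y, (hasPath_Z x y).1, (hasPath_Z x y).2.1⟩
  hasPath_Z := hasPath_Z
  hasPath_X := hasPath_X
  hasPath_Y := hasPath_Y
  edgeDeg_X y := by simp [edgeDeg_subtour, gadget]
  edgeDeg_Y x := by simp [edgeDeg_subtour, gadget]

theorem isParityGadget : gadget.IsParityGadget := by
  have subset_edges : sameEdges ⊆ edges ∧ diffEdges ⊆ edges ∧ Disjoint sameEdges diffEdges := by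
    decide +kernel
  have same_weight : ∀ x, (subtour x x ∩ sameEdges).card = 1 ∧ subtour x x ∩ diffEdges = ∅ := by
    decide +kernel
  have diff_weight : ∀ x, (subtour x (!x) ∩ diffEdges).card = 1 ∧
      subtour x (!x) ∩ sameEdges = ∅ := by
    decide +kernel
  refine isSubtourFamily.isParityGadget (by decide) ?_ ?_ ?_ ?_ ?_
  · exact edgeSet_gadget ▸ Finset.coe_subset.mpr subset_edges.1
  · exact edgeSet_gadget ▸ Finset.coe_subset.mpr subset_edges.2.1
  · exact Finset.disjoint_coe.mpr subset_edges.2.2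
  · simpa [gadget, ← Finset.coe_inter] using same_weight
  · simpa [gadget, ← Finset.coe_inter] using diff_weight

/-- The summands count the removed rail edges, spur edges and link edges. -/
theorem card_subtour_sdiff (x y x' y' : Bool) :
    (subtour x y \ subtour x' y').card =
      (if x = x' then 0 else if x then 2 else 3) + (if y = y' then 0 else if y then 0 else 1) +
        (if (x, y) = (x', y') then 0 else 1) := by
  revert x y x' y'
  decide +kernel

theorem swapCounts : gadget.SwapCounts 4 2 := by
  simp only [GadgetData.SwapCounts, isSubtourFamily.sub1_iff, isSubtourFamily.sub2_iff,
    isSubtourFamily.sub3_iff, isSubtourFamily.sub4_iff, forall_eq_apply_imp_iff, forall_eq,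
    ← Finset.coe_sdiff, Set.ncard_coe_finset, card_subtour_sdiff]
  simp

end FourTwoGadget

/-- there exists a (4,2)-simple gadget — a parity gadget satisfying the
(4,2) swap-count conditions whose only possible subtours are the subtours (1)–(4),
independent of the graph it is embedded into. -/
theorem exists_simple_four_two_gadget :
    ∃ (V : Type) (_ : Fintype V) (_ : DecidableEq V) (g : GadgetData V),
      g.IsParityGadget ∧ g.SwapCounts 4 2 ∧ g.IsSimple :=
  ⟨Fin 18, inferInstance, inferInstance, FourTwoGadget.gadget, FourTwoGadget.isParityGadget,
    FourTwoGadget.swapCounts, FourTwoGadget.isSubtourFamily.isSimple⟩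
end

section
/- The flexible gadget — the graph on the eight vertices X, X', Y, Y', Z, Z', R, S with the ten edges XR, RX', XZ, ZZ', Z'Y, YS, SY', Y'X', Y'Z, X'Z', where ZZ' and X'Y' are the same-set edges and Y'Z and X'Z' are the different-set edges — is a (2,2)-parity gadget. -/
open SimpleGraph

/-!
Statement 11: the flexible gadget — the graph on the eight vertices
`X = 0, X' = 1, Y = 2, Y' = 3, Z = 4, Z' = 5, R = 6, S = 7` with the ten edges
`XR, RX', XZ, ZZ', Z'Y, YS, SY', Y'X', Y'Z, X'Z'`, same-set edges `ZZ'` and `X'Y'`,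
different-set edges `Y'Z` and `X'Z'` — is a (2,2)-parity gadget.
-/

/-- The flexible gadget. -/
def flexibleGadget : GadgetData (Fin 8) where
  G := SimpleGraph.fromEdgeSet
    {s((0 : Fin 8), (6 : Fin 8)), s((6 : Fin 8), (1 : Fin 8)),
     s((0 : Fin 8), (4 : Fin 8)), s((4 : Fin 8), (5 : Fin 8)),
     s((5 : Fin 8), (2 : Fin 8)), s((2 : Fin 8), (7 : Fin 8)),
     s((7 : Fin 8), (3 : Fin 8)), s((3 : Fin 8), (1 : Fin 8)),
     s((3 : Fin 8), (4 : Fin 8)), s((1 : Fin 8), (5 : Fin 8))}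
  X := 0
  X' := 1
  Y := 2
  Y' := 3
  Z := 4
  Z' := 5
  sameSet := {s((4 : Fin 8), (5 : Fin 8)), s((1 : Fin 8), (3 : Fin 8))}
  diffSet := {s((3 : Fin 8), (4 : Fin 8)), s((1 : Fin 8), (5 : Fin 8))}

/-!
The vertices `R` and `S` are not distinguished, so they have degree two in every path cover, which
forces the edges `XR, RX', YS, SY'`. Six edges remain. Among them, only `XZ` meets `X` and only
`Z'Y` meets `Y`, so the prescribed degrees of `X` and `Y` decide these two. As `Z` and `Z'` have
degree at most one, `XZ` excludes `ZZ'` and `Y'Z`, and `Z'Y` excludes `ZZ'` and `X'Z'`. The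
prescribed degrees of `X'` and `Y'` (and, in subtour (4), the need to join `Z` to `Z'`) then settle
the remaining edges, so each of the four subtours has exactly one edge set.
-/

section PathEdges

variable {V : Type*} [DecidableEq V]

/-- The edges of the path that visits the vertices of a list in order. Path covers are given
below as unions of these edge sets, which keeps them decidable. -/
def pathEdges : List V → Finset (Sym2 V)
  | [] => ∅
  | [_] => ∅
  | u :: v :: l => insert s(u, v) (pathEdges (v :: l))

theorem mem_of_mem_pathEdges {e : Sym2 V} {v : V} (hv : v ∈ e) {l : List V}
    (he : e ∈ pathEdges l) : v ∈ l := by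
  induction l using pathEdges.induct with
  | case1 => exact absurd he (Finset.notMem_empty e)
  | case2 a => exact absurd he (Finset.notMem_empty e)
  | case3 a b l ih =>
    rcases Finset.mem_insert.1 he with rfl | he
    · rcases Sym2.mem_iff.1 hv with rfl | rfl <;> simp
    · exact List.mem_cons_of_mem a (ih he)

theorem isAcyclic_fromEdgeSet_pathEdges {l : List V} (hl : l.Nodup) :
    (fromEdgeSet (pathEdges l : Set (Sym2 V))).IsAcyclic := by
  induction l using pathEdges.induct with
  | case1 => simp [pathEdges]
  | case2 a => simp [pathEdges]
  | case3 a b l ih =>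
    obtain ⟨ha, hl⟩ := List.nodup_cons.1 hl
    have hab : a ≠ b := fun h => ha (h ▸ List.mem_cons_self)
    have isolated : (fromEdgeSet (pathEdges (b :: l) : Set (Sym2 V))).neighborSet a = ∅ :=
      Set.eq_empty_of_forall_notMem fun _ hu =>
        ha (mem_of_mem_pathEdges (Sym2.mem_mk_left _ _) ((fromEdgeSet_adj _).1 hu).1)
    have hsup := (ih hl).sup_edge_of_not_reachable
      (not_reachable_of_neighborSet_left_eq_empty hab isolated)
    rwa [edge, ← fromEdgeSet_union, Set.union_singleton, ← Finset.coe_insert] at hsup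

theorem reachable_of_pathEdges_subset {F : Set (Sym2 V)} {l : List V}
    (hl : (pathEdges l : Set (Sym2 V)) ⊆ F) {u v : V} (hu : u ∈ l) (hv : v ∈ l) :
    (fromEdgeSet F).Reachable u v := by
  induction l using pathEdges.induct generalizing u v with
  | case1 => exact absurd hu List.not_mem_nil
  | case2 a => rw [List.mem_singleton.1 hu, List.mem_singleton.1 hv]
  | case3 a b l ih =>
    rw [pathEdges, Finset.coe_insert, Set.insert_subset_iff] at hl
    have hab : (fromEdgeSet F).Reachable a b := by
      by_cases h : a = b
      · exact h ▸ .rfl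
      · exact ((fromEdgeSet_adj F).2 ⟨hl.1, h⟩).reachable
    have from_b {w : V} (hw : w ∈ a :: b :: l) : (fromEdgeSet F).Reachable b w := by
      rcases List.mem_cons.1 hw with rfl | hw
      · exact hab.symm
      · exact ih hl.2 List.mem_cons_self hw
    exact (from_b hu).symm.trans (from_b hv)

end PathEdges

section EdgeDeg

variable {V : Type*}

theorem edgeDeg_eq_ncard_incident (F : Set (Sym2 V)) (v : V) :
    edgeDeg F v = {e ∈ F | v ∈ e}.ncard := by
  have h : (fun u => s(v, u)) '' {u | s(v, u) ∈ F} = {e ∈ F | v ∈ e} := by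
    ext e
    constructor
    · rintro ⟨u, hu, rfl⟩
      exact ⟨hu, Sym2.mem_mk_left v u⟩
    · rintro ⟨he, u, rfl⟩
      exact ⟨u, he, rfl⟩
  rw [← h, Set.ncard_image_of_injective _ fun _ _ => Sym2.congr_right.1, edgeDeg]

theorem edgeDeg_coe [DecidableEq V] (T : Finset (Sym2 V)) (v : V) :
    edgeDeg (T : Set (Sym2 V)) v = {e ∈ T | v ∈ e}.card := by
  rw [edgeDeg_eq_ncard_incident, ← Set.ncard_coe_finset, Finset.coe_filter]
  rfl

variable {F : Set (Sym2 V)}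

theorem edgeDeg_eq_sum_indicator [DecidableEq V] {E : Finset (Sym2 V)} (hF : F ⊆ E) (v : V) :
    edgeDeg F v = ∑ e ∈ E with v ∈ e, F.indicator 1 e := by
  classical
  have h : F = ({e ∈ E | e ∈ F} : Finset (Sym2 V)) := by
    rw [Finset.coe_filter]
    exact (Set.inter_eq_right.2 hF).symm
  simp only [Set.indicator_apply, Pi.one_apply]
  rw [Finset.sum_boole, Finset.filter_comm, Nat.cast_id, ← edgeDeg_coe, ← h]

theorem IsEndpoint.edgeDeg_ne_two {v : V} (h : IsEndpoint F v) : edgeDeg F v ≠ 2 :=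
  (Nat.lt_succ_of_le h).ne

theorem edgeDeg_pos_of_reachable [Finite V] {u v : V} (huv : u ≠ v)
    (h : (fromEdgeSet F).Reachable u v) : 0 < edgeDeg F u := by
  obtain ⟨w, hw⟩ := h.nonempty_neighborSet_left huv
  exact (Set.ncard_pos).2 ⟨w, ((fromEdgeSet_adj F).1 hw).1⟩

theorem hasPath_coe [DecidableEq V] {T : Finset (Sym2 V)} {l : List V} (hl : pathEdges l ⊆ T)
    {a b : V} (ha : a ∈ l ∧ {e ∈ T | a ∈ e}.card ≤ 1) (hb : b ∈ l ∧ {e ∈ T | b ∈ e}.card ≤ 1) :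
    HasPath (T : Set (Sym2 V)) a b := by
  refine ⟨?_, ?_, reachable_of_pathEdges_subset (Finset.coe_subset.2 hl) ha.1 hb.1⟩
  · exact (edgeDeg_coe T a).trans_le ha.2
  · exact (edgeDeg_coe T b).trans_le hb.2

theorem GadgetData.isPathCover_coe [DecidableEq V] {g : GadgetData V} {T : Finset (Sym2 V)}
    {l : List V} (hl : l.Nodup) (hTl : T ⊆ pathEdges l) (hTG : (T : Set (Sym2 V)) ⊆ g.G.edgeSet)
    (hT : ∀ v, {e ∈ T | v ∈ e}.card ≤ 2 ∧ ({e ∈ T | v ∈ e}.card ≤ 1 → v ∈ g.terminals)) :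
    g.IsPathCover (T : Set (Sym2 V)) := by
  simp only [← edgeDeg_coe] at hT
  exact ⟨hTG, (isAcyclic_fromEdgeSet_pathEdges hl).anti
    (fromEdgeSet_mono (Finset.coe_subset.2 hTl)), fun v => (hT v).1, fun v => (hT v).2⟩

end EdgeDeg

namespace flexibleGadget

/-- The ten edges of the flexible gadget. -/
def edges : Finset (Sym2 (Fin 8)) :=
  {s(0, 6), s(6, 1), s(0, 4), s(4, 5), s(5, 2), s(2, 7), s(7, 3), s(3, 1), s(3, 4), s(1, 5)}

/-- The edges avoiding `R` and `S`; the other four lie in every subtour. -/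
def freeEdges : Finset (Sym2 (Fin 8)) :=
  {s(0, 4), s(4, 5), s(5, 2), s(3, 1), s(3, 4), s(1, 5)}

theorem edgeSet_eq : flexibleGadget.G.edgeSet = edges := by
  simp only [flexibleGadget, edgeSet_fromEdgeSet, edges, Finset.coe_insert, Finset.coe_singleton]
  refine sdiff_eq_left.2 (Set.disjoint_left.2 ?_)
  simp

theorem mem_terminals {v : Fin 8} : v ∈ flexibleGadget.terminals ↔ v ≠ 6 ∧ v ≠ 7 := by
  simp only [GadgetData.terminals, flexibleGadget, Set.mem_insert_iff, Set.mem_singleton_iff]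
  revert v
  decide

/-- The edge set of subtour (1). -/
def subtour1 : Finset (Sym2 (Fin 8)) :=
  pathEdges [4, 0, 6, 1, 3, 7, 2, 5]

/-- The edge set of subtour (2). -/
def subtour2 : Finset (Sym2 (Fin 8)) :=
  pathEdges [0, 6, 1] ∪ pathEdges [4, 3, 7, 2, 5]

/-- The edge set of subtour (3). -/
def subtour3 : Finset (Sym2 (Fin 8)) :=
  pathEdges [2, 7, 3] ∪ pathEdges [4, 0, 6, 1, 5]

/-- The edge set of subtour (4). -/
def subtour4 : Finset (Sym2 (Fin 8)) :=
  pathEdges [0, 6, 1] ∪ pathEdges [2, 7, 3] ∪ pathEdges [4, 5]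

theorem subtour_coe {T : Finset (Sym2 (Fin 8))} {l : List (Fin 8)} (hl : l.Nodup)
    (hTl : T ⊆ pathEdges l) (hT : T ⊆ edges)
    (hdeg : ∀ v, {e ∈ T | v ∈ e}.card ≤ 2 ∧ ({e ∈ T | v ∈ e}.card ≤ 1 → v ≠ 6 ∧ v ≠ 7))
    (hZ : {e ∈ T | 4 ∈ e}.card ≤ 1 ∧ {e ∈ T | 5 ∈ e}.card ≤ 1) :
    flexibleGadget.Subtour T := by
  simp only [← mem_terminals] at hdeg
  rw [← edgeDeg_coe, ← edgeDeg_coe] at hZ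
  exact ⟨GadgetData.isPathCover_coe hl hTl (edgeSet_eq ▸ Finset.coe_subset.2 hT) hdeg, hZ⟩

theorem subtour_subtour1 : flexibleGadget.Subtour subtour1 :=
  subtour_coe (l := [4, 0, 6, 1, 3, 7, 2, 5]) (by decide) (by decide) (by decide) (by decide)
    (by decide)

theorem subtour_subtour2 : flexibleGadget.Subtour subtour2 :=
  subtour_coe (l := [0, 6, 1, 4, 3, 7, 2, 5]) (by decide) (by decide) (by decide) (by decide)
    (by decide)

theorem subtour_subtour3 : flexibleGadget.Subtour subtour3 :=
  subtour_coe (l := [2, 7, 3, 4, 0, 6, 1, 5]) (by decide) (by decide) (by decide) (by decide)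
    (by decide)

theorem subtour_subtour4 : flexibleGadget.Subtour subtour4 :=
  subtour_coe (l := [0, 6, 1, 2, 7, 3, 4, 5]) (by decide) (by decide) (by decide) (by decide)
    (by decide)

theorem sub1_subtour1 : flexibleGadget.Sub1 subtour1 := by
  refine ⟨subtour_subtour1,
    hasPath_coe (l := [4, 0, 6, 1, 3, 7, 2, 5]) (by decide) (by decide) (by decide), ?_⟩
  simp only [edgeDeg_coe]
  decide

theorem sub2_subtour2 : flexibleGadget.Sub2 subtour2 := by
  refine ⟨subtour_subtour2,
    hasPath_coe (l := [4, 3, 7, 2, 5]) (by decide) (by decide) (by decide),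
    hasPath_coe (l := [0, 6, 1]) (by decide) (by decide) (by decide), ?_⟩
  simp only [edgeDeg_coe]
  decide

theorem sub3_subtour3 : flexibleGadget.Sub3 subtour3 := by
  refine ⟨subtour_subtour3,
    hasPath_coe (l := [4, 0, 6, 1, 5]) (by decide) (by decide) (by decide),
    hasPath_coe (l := [2, 7, 3]) (by decide) (by decide) (by decide), ?_⟩
  simp only [edgeDeg_coe]
  decide

theorem sub4_subtour4 : flexibleGadget.Sub4 subtour4 :=
  ⟨subtour_subtour4,
    hasPath_coe (l := [4, 5]) (by decide) (by decide) (by decide),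
    hasPath_coe (l := [0, 6, 1]) (by decide) (by decide) (by decide),
    hasPath_coe (l := [2, 7, 3]) (by decide) (by decide) (by decide)⟩

section Uniqueness

variable {F : Set (Sym2 (Fin 8))}

theorem edgeDeg_eq_of_subset_edges (hF : F ⊆ edges) :
    edgeDeg F 0 = F.indicator 1 s(0, 6) + F.indicator 1 s(0, 4) ∧
    edgeDeg F 1 = F.indicator 1 s(6, 1) + F.indicator 1 s(3, 1) + F.indicator 1 s(1, 5) ∧
    edgeDeg F 2 = F.indicator 1 s(2, 7) + F.indicator 1 s(5, 2) ∧
    edgeDeg F 3 = F.indicator 1 s(7, 3) + F.indicator 1 s(3, 1) + F.indicator 1 s(3, 4) ∧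
    edgeDeg F 4 = F.indicator 1 s(0, 4) + F.indicator 1 s(4, 5) + F.indicator 1 s(3, 4) ∧
    edgeDeg F 5 = F.indicator 1 s(4, 5) + F.indicator 1 s(5, 2) + F.indicator 1 s(1, 5) ∧
    edgeDeg F 6 = F.indicator 1 s(0, 6) + F.indicator 1 s(6, 1) ∧
    edgeDeg F 7 = F.indicator 1 s(2, 7) + F.indicator 1 s(7, 3) := by
  have edgeDeg_eq (v : Fin 8) (N : Finset (Sym2 (Fin 8))) (hN : {e ∈ edges | v ∈ e} = N) :
      edgeDeg F v = ∑ e ∈ N, F.indicator 1 e :=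
    hN ▸ edgeDeg_eq_sum_indicator hF v
  refine ⟨?_, ?_, ?_, ?_, ?_, ?_, ?_, ?_⟩
  · simp [edgeDeg_eq 0 {s(0, 6), s(0, 4)} (by decide)]
  · simp [edgeDeg_eq 1 {s(6, 1), s(3, 1), s(1, 5)} (by decide), add_assoc]
  · simp [edgeDeg_eq 2 {s(2, 7), s(5, 2)} (by decide)]
  · simp [edgeDeg_eq 3 {s(7, 3), s(3, 1), s(3, 4)} (by decide), add_assoc]
  · simp [edgeDeg_eq 4 {s(0, 4), s(4, 5), s(3, 4)} (by decide), add_assoc]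
  · simp [edgeDeg_eq 5 {s(4, 5), s(5, 2), s(1, 5)} (by decide), add_assoc]
  · simp [edgeDeg_eq 6 {s(0, 6), s(6, 1)} (by decide)]
  · simp [edgeDeg_eq 7 {s(2, 7), s(7, 3)} (by decide)]

theorem mem_edges_at_R_S_of_subtour (h : flexibleGadget.Subtour F) :
    s(0, 6) ∈ F ∧ s(6, 1) ∈ F ∧ s(2, 7) ∈ F ∧ s(7, 3) ∈ F := by
  classical
  obtain ⟨⟨hF, -, -, hterm⟩, -⟩ := h
  have hR : ¬ edgeDeg F 6 ≤ 1 := fun h => (mem_terminals.1 (hterm 6 h)).1 rfl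
  have hS : ¬ edgeDeg F 7 ≤ 1 := fun h => (mem_terminals.1 (hterm 7 h)).2 rfl
  obtain ⟨-, -, -, -, -, -, degR, degS⟩ := edgeDeg_eq_of_subset_edges (edgeSet_eq ▸ hF)
  simp only [Set.indicator_apply, Pi.one_apply] at degR degS
  grind

theorem eq_of_forall_mem_freeEdges {F' : Set (Sym2 (Fin 8))} (h : flexibleGadget.Subtour F)
    (h' : flexibleGadget.Subtour F') (hFF' : ∀ e ∈ freeEdges, e ∈ F ↔ e ∈ F') : F = F' := by
  have agree : ∀ e ∈ edges, e ∈ F ↔ e ∈ F' := by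
    have forced := mem_edges_at_R_S_of_subtour h
    have forced' := mem_edges_at_R_S_of_subtour h'
    simp_all [edges, freeEdges]
  ext e
  exact ⟨fun he => (agree e (edgeSet_eq.subset (h.1.1 he))).1 he,
    fun he => (agree e (edgeSet_eq.subset (h'.1.1 he))).2 he⟩

theorem edgeDeg_eq_two_iff_mem_of_subtour (h : flexibleGadget.Subtour F) :
    (edgeDeg F 0 = 2 ↔ s(0, 4) ∈ F) ∧
    (edgeDeg F 1 = 2 ↔ s(3, 1) ∈ F ∨ s(1, 5) ∈ F) ∧
    (edgeDeg F 2 = 2 ↔ s(5, 2) ∈ F) ∧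
    (edgeDeg F 3 = 2 ↔ s(3, 1) ∈ F ∨ s(3, 4) ∈ F) := by
  classical
  obtain ⟨degX, degX', degY, degY', -⟩ := edgeDeg_eq_of_subset_edges (edgeSet_eq ▸ h.1.1)
  obtain ⟨hXR, hRX', hYS, hSY'⟩ := mem_edges_at_R_S_of_subtour h
  have hX' : edgeDeg F 1 ≤ 2 := h.1.2.2.1 1
  have hY' : edgeDeg F 3 ≤ 2 := h.1.2.2.1 3
  simp only [Set.indicator_apply, Pi.one_apply] at degX degX' degY degY'
  refine ⟨?_, ?_, ?_, ?_⟩ <;> grind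

theorem notMem_of_subtour_of_mem_XZ (h : flexibleGadget.Subtour F) (hXZ : s(0, 4) ∈ F) :
    s(4, 5) ∉ F ∧ s(3, 4) ∉ F := by
  classical
  obtain ⟨-, -, -, -, degZ, -⟩ := edgeDeg_eq_of_subset_edges (edgeSet_eq ▸ h.1.1)
  have hZ : edgeDeg F 4 ≤ 1 := h.2.1
  simp only [Set.indicator_apply, Pi.one_apply] at degZ
  grind

theorem notMem_of_subtour_of_mem_Z'Y (h : flexibleGadget.Subtour F) (hZ'Y : s(5, 2) ∈ F) :
    s(4, 5) ∉ F ∧ s(1, 5) ∉ F := by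
  classical
  obtain ⟨-, -, -, -, -, degZ', -⟩ := edgeDeg_eq_of_subset_edges (edgeSet_eq ▸ h.1.1)
  have hZ' : edgeDeg F 5 ≤ 1 := h.2.2
  simp only [Set.indicator_apply, Pi.one_apply] at degZ'
  grind

theorem mem_edges_at_Z_of_reachable (hF : F ⊆ edges) {v : Fin 8} (hv : 4 ≠ v)
    (h : (fromEdgeSet F).Reachable 4 v) :
    s(0, 4) ∈ F ∨ s(4, 5) ∈ F ∨ s(3, 4) ∈ F := by
  classical
  obtain ⟨-, -, -, -, degZ, -⟩ := edgeDeg_eq_of_subset_edges hF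
  have hZ : 0 < edgeDeg F 4 := edgeDeg_pos_of_reachable hv h
  simp only [Set.indicator_apply, Pi.one_apply] at degZ
  grind

theorem eq_subtour1_of_sub1 (h : flexibleGadget.Sub1 F) : F = subtour1 := by
  obtain ⟨hs, -, hX, hX', hY, -⟩ := h
  obtain ⟨degX, degX', degY, -⟩ := edgeDeg_eq_two_iff_mem_of_subtour hs
  have hXZ : s(0, 4) ∈ F := degX.1 hX
  have hZ'Y : s(5, 2) ∈ F := degY.1 hY
  obtain ⟨hZZ', hY'Z⟩ := notMem_of_subtour_of_mem_XZ hs hXZ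
  have hX'Z' : s(1, 5) ∉ F := (notMem_of_subtour_of_mem_Z'Y hs hZ'Y).2
  have hY'X' : s(3, 1) ∈ F := (degX'.1 hX').resolve_right hX'Z'
  refine eq_of_forall_mem_freeEdges hs subtour_subtour1 ?_
  simp [freeEdges, subtour1, pathEdges, *]

theorem eq_subtour2_of_sub2 (h : flexibleGadget.Sub2 F) : F = subtour2 := by
  obtain ⟨hs, -, ⟨hX, hX', -⟩, hY, hY'⟩ := h
  obtain ⟨degX, degX', degY, degY'⟩ := edgeDeg_eq_two_iff_mem_of_subtour hs
  have hXZ : s(0, 4) ∉ F := mt degX.2 hX.edgeDeg_ne_two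
  obtain ⟨hY'X', hX'Z'⟩ := not_or.1 (mt degX'.2 hX'.edgeDeg_ne_two)
  have hZ'Y : s(5, 2) ∈ F := degY.1 hY
  have hZZ' : s(4, 5) ∉ F := (notMem_of_subtour_of_mem_Z'Y hs hZ'Y).1
  have hY'Z : s(3, 4) ∈ F := (degY'.1 hY').resolve_left hY'X'
  refine eq_of_forall_mem_freeEdges hs subtour_subtour2 ?_
  simp [freeEdges, subtour2, pathEdges, *]

theorem eq_subtour3_of_sub3 (h : flexibleGadget.Sub3 F) : F = subtour3 := by
  obtain ⟨hs, -, ⟨hY, hY', -⟩, hX, hX'⟩ := h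
  obtain ⟨degX, degX', degY, degY'⟩ := edgeDeg_eq_two_iff_mem_of_subtour hs
  have hZ'Y : s(5, 2) ∉ F := mt degY.2 hY.edgeDeg_ne_two
  obtain ⟨hY'X', hY'Z⟩ := not_or.1 (mt degY'.2 hY'.edgeDeg_ne_two)
  have hXZ : s(0, 4) ∈ F := degX.1 hX
  have hZZ' : s(4, 5) ∉ F := (notMem_of_subtour_of_mem_XZ hs hXZ).1
  have hX'Z' : s(1, 5) ∈ F := (degX'.1 hX').resolve_left hY'X'
  refine eq_of_forall_mem_freeEdges hs subtour_subtour3 ?_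
  simp [freeEdges, subtour3, pathEdges, *]

theorem eq_subtour4_of_sub4 (h : flexibleGadget.Sub4 F) : F = subtour4 := by
  obtain ⟨hs, ⟨-, -, reachZ⟩, ⟨hX, hX', -⟩, ⟨hY, hY', -⟩⟩ := h
  obtain ⟨degX, degX', degY, degY'⟩ := edgeDeg_eq_two_iff_mem_of_subtour hs
  have hXZ : s(0, 4) ∉ F := mt degX.2 hX.edgeDeg_ne_two
  obtain ⟨hY'X', hX'Z'⟩ := not_or.1 (mt degX'.2 hX'.edgeDeg_ne_two)
  have hZ'Y : s(5, 2) ∉ F := mt degY.2 hY.edgeDeg_ne_two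
  have hY'Z : s(3, 4) ∉ F := (not_or.1 (mt degY'.2 hY'.edgeDeg_ne_two)).2
  have hZ := mem_edges_at_Z_of_reachable (edgeSet_eq ▸ hs.1.1) (by decide) reachZ
  have hZZ' : s(4, 5) ∈ F := (hZ.resolve_left hXZ).resolve_right hY'Z
  refine eq_of_forall_mem_freeEdges hs subtour_subtour4 ?_
  simp [freeEdges, subtour4, pathEdges, *]

end Uniqueness

theorem sub1_iff {F : Set (Sym2 (Fin 8))} : flexibleGadget.Sub1 F ↔ F = subtour1 :=
  ⟨eq_subtour1_of_sub1, fun h => h ▸ sub1_subtour1⟩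

theorem sub2_iff {F : Set (Sym2 (Fin 8))} : flexibleGadget.Sub2 F ↔ F = subtour2 :=
  ⟨eq_subtour2_of_sub2, fun h => h ▸ sub2_subtour2⟩

theorem sub3_iff {F : Set (Sym2 (Fin 8))} : flexibleGadget.Sub3 F ↔ F = subtour3 :=
  ⟨eq_subtour3_of_sub3, fun h => h ▸ sub3_subtour3⟩

theorem sub4_iff {F : Set (Sym2 (Fin 8))} : flexibleGadget.Sub4 F ↔ F = subtour4 :=
  ⟨eq_subtour4_of_sub4, fun h => h ▸ sub4_subtour4⟩

theorem hasPath_X_X'_of_subtour {F : Set (Sym2 (Fin 8))} (h : flexibleGadget.Subtour F)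
    (hX : IsEndpoint F 0) (hX' : IsEndpoint F 1) : HasPath F 0 1 := by
  obtain ⟨hXR, hRX', -⟩ := mem_edges_at_R_S_of_subtour h
  have hl : (pathEdges ([0, 6, 1] : List (Fin 8)) : Set (Sym2 (Fin 8))) ⊆ F := by
    simp [pathEdges, Set.insert_subset_iff, hXR, hRX']
  exact ⟨hX, hX', reachable_of_pathEdges_subset hl (by decide) (by decide)⟩

theorem hasPath_Y_Y'_of_subtour {F : Set (Sym2 (Fin 8))} (h : flexibleGadget.Subtour F)
    (hY : IsEndpoint F 2) (hY' : IsEndpoint F 3) : HasPath F 2 3 := by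
  obtain ⟨-, -, hYS, hSY'⟩ := mem_edges_at_R_S_of_subtour h
  have hl : (pathEdges ([2, 7, 3] : List (Fin 8)) : Set (Sym2 (Fin 8))) ⊆ F := by
    simp [pathEdges, Set.insert_subset_iff, hYS, hSY']
  exact ⟨hY, hY', reachable_of_pathEdges_subset hl (by decide) (by decide)⟩

theorem sameSet_eq :
    flexibleGadget.sameSet = ({s(4, 5), s(1, 3)} : Finset (Sym2 (Fin 8))) := by
  simp [flexibleGadget]

theorem diffSet_eq :
    flexibleGadget.diffSet = ({s(3, 4), s(1, 5)} : Finset (Sym2 (Fin 8))) := by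
  simp [flexibleGadget]

theorem isParityGadget : flexibleGadget.IsParityGadget where
  nodup := by decide
  same_sub := by
    rw [sameSet_eq, edgeSet_eq, Finset.coe_subset]
    decide
  diff_sub := by
    rw [diffSet_eq, edgeSet_eq, Finset.coe_subset]
    decide
  disj := by
    rw [sameSet_eq, diffSet_eq, Finset.disjoint_coe]
    decide
  ex1 := by simp only [sub1_iff, existsUnique_eq]
  ex2 := by simp only [sub2_iff, existsUnique_eq]
  ex3 := by simp only [sub3_iff, existsUnique_eq]
  ex4 := by simp only [sub4_iff, existsUnique_eq]
  xpair _ := hasPath_X_X'_of_subtour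
  ypair _ := hasPath_Y_Y'_of_subtour
  w1 := by
    simp only [sub1_iff, forall_eq, sameSet_eq, diffSet_eq, ← Finset.coe_inter,
      Set.ncard_coe_finset, Finset.coe_eq_empty]
    decide
  w4 := by
    simp only [sub4_iff, forall_eq, sameSet_eq, diffSet_eq, ← Finset.coe_inter,
      Set.ncard_coe_finset, Finset.coe_eq_empty]
    decide
  w2 := by
    simp only [sub2_iff, forall_eq, sameSet_eq, diffSet_eq, ← Finset.coe_inter,
      Set.ncard_coe_finset, Finset.coe_eq_empty]
    decide
  w3 := by
    simp only [sub3_iff, forall_eq, sameSet_eq, diffSet_eq, ← Finset.coe_inter,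
      Set.ncard_coe_finset, Finset.coe_eq_empty]
    decide

theorem swapCounts_two_two : flexibleGadget.SwapCounts 2 2 := by
  simp only [GadgetData.SwapCounts, sub1_iff, sub2_iff, sub3_iff, sub4_iff,
    forall_eq_apply_imp_iff, forall_eq, ← Finset.coe_sdiff, Set.ncard_coe_finset]
  decide

end flexibleGadget

/-- The flexible gadget is a (2,2)-parity gadget. -/
theorem flexibleGadget_is_two_two_parity_gadget :
    flexibleGadget.IsParityGadget ∧ flexibleGadget.SwapCounts 2 2 :=
  ⟨flexibleGadget.isParityGadget, flexibleGadget.swapCounts_two_two⟩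
end
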